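/- arXiv:1410.0402 — 3 statements merged into one kernel-verified Lean document; each statement's English description precedes it below -/
import Mathlib

section
/- For every (a, b) ∈ Q_k and every u ∈ H: u ∈ K(a, b) if and only if u ∈ S_k(a, b) ∩ S^k(a, b) and ⟨u, y⟩ = ∫_Ω ( b u⁺ − a u⁻ ) y dμ for all y ∈ E_k. Consequently K(a, b) ⊆ { u ∈ S_k(a, b) ∩ S^k(a, b) : I(u, a, b) = 0 }. -/
open MeasureTheory RealInnerProductSpace

noncomputable def GG {Ω : Type*} [MeasurableSpace Ω] {μ : Measure Ω} (a b : ℝ) (f : Lp ℝ 2 μ) :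
    Lp ℝ 2 μ := b • Lp.posPart f - a • Lp.negPart f

lemma GG_coe {Ω : Type*} [MeasurableSpace Ω] {μ : Measure Ω} (a b : ℝ) (f : Lp ℝ 2 μ) :
    ∀ᵐ x ∂μ, GG a b f x = b * Lp.posPart f x - a * Lp.negPart f x := by
  filter_upwards [Lp.coeFn_sub (b • Lp.posPart f) (a • Lp.negPart f),
    Lp.coeFn_smul b (Lp.posPart f), Lp.coeFn_smul a (Lp.negPart f)] with x h1 h2 h3
  rw [GG, h1, Pi.sub_apply, h2, h3]
  simp

lemma GG_coe2 {Ω : Type*} [MeasurableSpace Ω] {μ : Measure Ω} (a b : ℝ) (f : Lp ℝ 2 μ) :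
    ∀ᵐ x ∂μ, GG a b f x = b * max (f x) 0 - a * max (-f x) 0 := by
  filter_upwards [GG_coe a b f, Lp.coeFn_posPart f, Lp.coeFn_negPart_eq_max f] with x h1 h2 h3
  rw [h1, h2, h3]

lemma GG_inner {Ω : Type*} [MeasurableSpace Ω] {μ : Measure Ω} (a b : ℝ) (f g : Lp ℝ 2 μ) :
    ∫ x, (b * (Lp.posPart f) x - a * (Lp.negPart f) x) * g x ∂μ = ⟪GG a b f, g⟫ := by
  rw [L2.inner_def]
  apply integral_congr_ae
  filter_upwards [GG_coe a b f] with x h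
  rw [h]
  simp [mul_comm]

lemma GG_self {Ω : Type*} [MeasurableSpace Ω] {μ : Measure Ω} (a b : ℝ) (f : Lp ℝ 2 μ) :
    ∫ x, (b * (Lp.posPart f) x ^ 2 + a * (Lp.negPart f) x ^ 2) ∂μ = ⟪GG a b f, f⟫ := by
  rw [← GG_inner]
  apply integral_congr_ae
  filter_upwards [Lp.coeFn_posPart f, Lp.coeFn_negPart_eq_max f] with x h2 h3
  simp only [h2, h3]
  rcases le_total (f x) 0 with h | h
  · rw [max_eq_right h, max_eq_left (by linarith : 0 ≤ -f x)]; ring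
  · rw [max_eq_left h, max_eq_right (by linarith : -f x ≤ 0)]; ring

lemma GG_neg {Ω : Type*} [MeasurableSpace Ω] {μ : Measure Ω} (a b : ℝ) (f : Lp ℝ 2 μ) :
    GG (-a) (-b) f = - GG a b f := by
  unfold GG
  module

lemma scalar_lower (a b c s t : ℝ) (ha : c ≤ a) (hb : c ≤ b) :
    0 ≤ (b * max t 0 - a * max (-t) 0) * t - (b * max s 0 - a * max (-s) 0) * s
      - 2 * ((b * max s 0 - a * max (-s) 0) * (t - s)) - c * ((t - s) * (t - s)) := by
  rcases le_total s 0 with h | h <;> rcases le_total t 0 with h' | h'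
  · rw [max_eq_right h, max_eq_left (by linarith : 0 ≤ -s), max_eq_right h',
      max_eq_left (by linarith : 0 ≤ -t)]
    nlinarith [mul_nonneg (sub_nonneg.2 ha) (sq_nonneg (t - s))]
  · rw [max_eq_right h, max_eq_left (by linarith : 0 ≤ -s), max_eq_left h',
      max_eq_right (by linarith : -t ≤ 0)]
    have h1 := mul_nonneg (sub_nonneg.2 ha) (sq_nonneg s)
    have h2 := mul_nonneg (sub_nonneg.2 hb) (sq_nonneg t)
    have h3 := mul_nonneg (sub_nonneg.2 ha) (mul_nonneg (neg_nonneg.2 h) h')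
    nlinarith
  · rw [max_eq_left h, max_eq_right (by linarith : -s ≤ 0), max_eq_right h',
      max_eq_left (by linarith : 0 ≤ -t)]
    have h1 := mul_nonneg (sub_nonneg.2 hb) (sq_nonneg s)
    have h2 := mul_nonneg (sub_nonneg.2 ha) (sq_nonneg t)
    have h3 := mul_nonneg (sub_nonneg.2 hb) (mul_nonneg (neg_nonneg.2 h') h)
    nlinarith
  · rw [max_eq_left h, max_eq_right (by linarith : -s ≤ 0), max_eq_left h',
      max_eq_right (by linarith : -t ≤ 0)]
    nlinarith [mul_nonneg (sub_nonneg.2 hb) (sq_nonneg (t - s))]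

lemma GG_lower {Ω : Type*} [MeasurableSpace Ω] {μ : Measure Ω} (a b c : ℝ) (ha : c ≤ a)
    (hb : c ≤ b) (f h : Lp ℝ 2 μ) :
    c * ‖h‖ ^ 2 ≤ ⟪GG a b (f + h), f + h⟫ - ⟪GG a b f, f⟫ - 2 * ⟪GG a b f, h⟫ := by
  have key : 0 ≤ ⟪GG a b (f + h), f + h⟫ - ⟪GG a b f, f⟫ - 2 * ⟪GG a b f, h⟫ - c * ⟪h, h⟫ := by
    have i1 := L2.integrable_inner (𝕜 := ℝ) (GG a b (f + h)) (f + h)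
    have i2 := L2.integrable_inner (𝕜 := ℝ) (GG a b f) f
    have i3 := (L2.integrable_inner (𝕜 := ℝ) (GG a b f) h).const_mul 2
    have i4 := (L2.integrable_inner (𝕜 := ℝ) h h).const_mul c
    simp only [L2.inner_def]
    rw [← integral_const_mul, ← integral_const_mul, ← integral_sub' i1 i2,
      ← integral_sub' (i1.sub i2) i3, ← integral_sub' ((i1.sub i2).sub i3) i4]
    apply integral_nonneg_of_ae
    filter_upwards [GG_coe2 a b f, GG_coe2 a b (f + h), Lp.coeFn_add f h] with x h1 h2 h3
    have := scalar_lower a b c (f x) (f x + h x) ha hb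
    simp only [Pi.zero_apply, Pi.sub_apply, h1, h2, h3, Pi.add_apply, RCLike.inner_apply, conj_trivial]
    refine this.trans_eq ?_
    ring
  rw [real_inner_self_eq_norm_sq] at key
  linarith

lemma GG_upper {Ω : Type*} [MeasurableSpace Ω] {μ : Measure Ω} (a b d : ℝ) (ha : a ≤ d)
    (hb : b ≤ d) (f h : Lp ℝ 2 μ) :
    ⟪GG a b (f + h), f + h⟫ - ⟪GG a b f, f⟫ - 2 * ⟪GG a b f, h⟫ ≤ d * ‖h‖ ^ 2 := by
  have := GG_lower (-a) (-b) (-d) (neg_le_neg ha) (neg_le_neg hb) f h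
  simp only [GG_neg, inner_neg_left] at this
  linarith

lemma zero_of_quad (D B : ℝ) (h : ∀ t : ℝ, 2 * (t * D) ≤ t ^ 2 * B) : D = 0 := by
  by_contra hD
  have hB : 0 < |B| + 1 := by positivity
  have h1 := h (D / (|B| + 1))
  have h2 : 0 < D ^ 2 := by positivity
  have h3 : 2 * (D / (|B| + 1) * D) = 2 * (|B| + 1) * (D ^ 2 / (|B| + 1) ^ 2) := by
    field_simp
  have h4 : (D / (|B| + 1)) ^ 2 * B = B * (D ^ 2 / (|B| + 1) ^ 2) := by
    field_simp
  rw [h3, h4] at h1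
  have h5 : 0 < D ^ 2 / (|B| + 1) ^ 2 := by positivity
  have h6 := le_of_mul_le_mul_right h1 h5
  linarith [le_abs_self B, abs_nonneg B]


theorem K_eq_inter_null_characterization
    {Ω : Type*} [MeasurableSpace Ω] (μ : Measure Ω)
    {H : Type*} [NormedAddCommGroup H] [InnerProductSpace ℝ H] [CompleteSpace H]
    (ι : H →ₗ[ℝ] Lp ℝ 2 μ) (hι : Function.Injective ι)
    (C : ℝ) (hC : 0 < C) (hιC : ∀ u : H, ‖ι u‖ ≤ C * ‖u‖)
    (I : H → ℝ → ℝ → ℝ)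
    (hI : ∀ u a b, I u a b = ‖u‖ ^ 2 / 2 -
      (∫ x, (b * (Lp.posPart (ι u)) x ^ 2 + a * (Lp.negPart (ι u)) x ^ 2) ∂μ) / 2)
    (lam₀ lam₁ lam₂ : ℝ) (hlam₀ : 0 < lam₀) (hlam₀₁ : lam₀ < lam₁) (hlam₁₂ : lam₁ < lam₂)
    (N E M : Submodule ℝ H)
    (hNcl : IsClosed (N : Set H)) (hEcl : IsClosed (E : Set H)) (hMcl : IsClosed (M : Set H))
    (hNfd : FiniteDimensional ℝ N) (hEfd : FiniteDimensional ℝ E) (hEne : E ≠ ⊥)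
    (horthNE : ∀ v ∈ N, ∀ y ∈ E, ⟪v, y⟫ = 0)
    (horthNM : ∀ v ∈ N, ∀ w ∈ M, ⟪v, w⟫ = 0)
    (horthEM : ∀ y ∈ E, ∀ w ∈ M, ⟪y, w⟫ = 0)
    (horthNE2 : ∀ v ∈ N, ∀ y ∈ E, ∫ x, (ι v) x * (ι y) x ∂μ = 0)
    (horthNM2 : ∀ v ∈ N, ∀ w ∈ M, ∫ x, (ι v) x * (ι w) x ∂μ = 0)
    (horthEM2 : ∀ y ∈ E, ∀ w ∈ M, ∫ x, (ι y) x * (ι w) x ∂μ = 0)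
    (hdirect : N ⊔ E ⊔ M = ⊤)
    (hNspec : ∀ v ∈ N, ‖v‖ ^ 2 ≤ lam₀ * ‖ι v‖ ^ 2)
    (hEspec : ∀ y ∈ E, ∀ u : H, ⟪y, u⟫ = lam₁ * ∫ x, (ι y) x * (ι u) x ∂μ)
    (hMspec : ∀ w ∈ M, lam₂ * ‖ι w‖ ^ 2 ≤ ‖w‖ ^ 2)
    (hcompact : ∀ s : Set H, Bornology.IsBounded s →
      IsCompact (closure ((fun u => ι u) '' s)))
    (K : ℝ → ℝ → Set H)
    (hK : ∀ a b, K a b = {u : H | ∀ v : H,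
      ⟪u, v⟫ = ∫ x, (b * (Lp.posPart (ι u)) x - a * (Lp.negPart (ι u)) x) * (ι v) x ∂μ})
    (θ : ℝ → ℝ → H → H)
    (hθ : ∀ a b, a ∈ Set.Ioo lam₀ lam₂ → b ∈ Set.Ioo lam₀ lam₂ → ∀ w ∈ E ⊔ M,
      θ a b w ∈ N ∧ (∀ v ∈ N, I (v + w) a b ≤ I (θ a b w + w) a b) ∧
      (∀ v ∈ N, (∀ v' ∈ N, I (v' + w) a b ≤ I (v + w) a b) → v = θ a b w))
    (τ : ℝ → ℝ → H → H)
    (hτ : ∀ a b, a ∈ Set.Ioo lam₀ lam₂ → b ∈ Set.Ioo lam₀ lam₂ → ∀ v ∈ N ⊔ E,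
      τ a b v ∈ M ∧ (∀ w ∈ M, I (v + τ a b v) a b ≤ I (v + w) a b) ∧
      (∀ w ∈ M, (∀ w' ∈ M, I (v + w) a b ≤ I (v + w') a b) → w = τ a b v))
    (Sk Sk' : ℝ → ℝ → Set H)
    (hSk : ∀ a b, Sk a b = {u : H | ∃ w ∈ E ⊔ M, u = θ a b w + w})
    (hSk' : ∀ a b, Sk' a b = {u : H | ∃ v ∈ N ⊔ E, u = v + τ a b v})
    :
    ∀ a b, a ∈ Set.Ioo lam₀ lam₂ → b ∈ Set.Ioo lam₀ lam₂ →
      (∀ u : H, u ∈ K a b ↔ (u ∈ Sk a b ∩ Sk' a b ∧ ∀ y ∈ E,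
        ⟪u, y⟫ = ∫ x, (b * (Lp.posPart (ι u)) x - a * (Lp.negPart (ι u)) x) * (ι y) x ∂μ)) ∧
      K a b ⊆ {u ∈ Sk a b ∩ Sk' a b | I u a b = 0} := by
  intro a b ha hb
  simp only [GG_inner] at hK ⊢
  simp only [GG_self] at hI
  have hmem : ∀ u, u ∈ K a b ↔ ∀ v, ⟪u, v⟫ = ⟪GG a b (ι u), ι v⟫ := by
    intro u; rw [hK]; rfl
  have lo : ∀ u h, 2 * I (u + h) a b - 2 * I u a b
      ≤ 2 * (⟪u, h⟫ - ⟪GG a b (ι u), ι h⟫) + ‖h‖ ^ 2 - lam₀ * ‖ι h‖ ^ 2 := by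
    intro u h
    have := GG_lower a b lam₀ ha.1.le hb.1.le (ι u) (ι h)
    rw [hI, hI, map_add, norm_add_sq_real]
    linarith
  have up : ∀ u h, 2 * (⟪u, h⟫ - ⟪GG a b (ι u), ι h⟫) + ‖h‖ ^ 2 - lam₂ * ‖ι h‖ ^ 2
      ≤ 2 * I (u + h) a b - 2 * I u a b := by
    intro u h
    have := GG_upper a b lam₂ ha.2.le hb.2.le (ι u) (ι h)
    rw [hI, hI, map_add, norm_add_sq_real]
    linarith
  have hfwd : ∀ u ∈ K a b, u ∈ Sk a b ∩ Sk' a b := by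
    intro u hu
    rw [hmem] at hu
    have hut : u ∈ N ⊔ E ⊔ M := hdirect ▸ Submodule.mem_top
    constructor
    · rw [hSk]
      rw [sup_assoc] at hut
      obtain ⟨v, hv, w, hw, rfl⟩ := Submodule.mem_sup.1 hut
      refine ⟨w, hw, ?_⟩
      rw [← (hθ a b ha hb w hw).2.2 v hv]
      intro v' hv'
      have h1 := lo (v + w) (v' - v)
      have h2 := hNspec (v' - v) (N.sub_mem hv' hv)
      rw [hu, show v + w + (v' - v) = v' + w by abel] at h1
      linarith
    · rw [hSk']
      obtain ⟨v, hv, w, hw, rfl⟩ := Submodule.mem_sup.1 hut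
      refine ⟨v, hv, ?_⟩
      rw [← (hτ a b ha hb v hv).2.2 w hw]
      intro w' hw'
      have h1 := up (v + w) (w' - w)
      have h2 := hMspec (w' - w) (M.sub_mem hw' hw)
      rw [hu, show v + w + (w' - w) = v + w' by abel] at h1
      linarith
  refine ⟨fun u => ⟨fun hu => ⟨hfwd u hu, fun y _ => (hmem u).1 hu y⟩, ?_⟩, fun u hu => ⟨hfwd u hu, ?_⟩⟩
  · rintro ⟨⟨h1, h2⟩, hE⟩
    have hN : ∀ h ∈ N, ⟪u, h⟫ = ⟪GG a b (ι u), ι h⟫ := by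
      intro h hh
      rw [hSk] at h1
      obtain ⟨w, hw, hu⟩ := h1
      obtain ⟨p1, p2, -⟩ := hθ a b ha hb w hw
      refine sub_eq_zero.1 (zero_of_quad _ (lam₂ * ‖ι h‖ ^ 2 - ‖h‖ ^ 2) fun t => ?_)
      have q := up u (t • h)
      have q2 := p2 (θ a b w + t • h) (N.add_mem p1 (N.smul_mem t hh))
      rw [add_right_comm, ← hu] at q2
      rw [map_smul, inner_smul_right, inner_smul_right, norm_smul, norm_smul, mul_pow, mul_pow,
        Real.norm_eq_abs, sq_abs] at q
      linarith
    have hM : ∀ h ∈ M, ⟪u, h⟫ = ⟪GG a b (ι u), ι h⟫ := by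
      intro h hh
      rw [hSk'] at h2
      obtain ⟨v, hv, hu⟩ := h2
      obtain ⟨p1, p2, -⟩ := hτ a b ha hb v hv
      refine sub_eq_zero.1 (neg_eq_zero.1
        (zero_of_quad _ (‖h‖ ^ 2 - lam₀ * ‖ι h‖ ^ 2) fun t => ?_))
      have q := lo u (t • h)
      have q2 := p2 (τ a b v + t • h) (M.add_mem p1 (M.smul_mem t hh))
      rw [← add_assoc, ← hu] at q2
      rw [map_smul, inner_smul_right, inner_smul_right, norm_smul, norm_smul, mul_pow, mul_pow,
        Real.norm_eq_abs, sq_abs] at q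
      linarith
    rw [hmem]
    intro z
    have hz : z ∈ N ⊔ E ⊔ M := hdirect ▸ Submodule.mem_top
    obtain ⟨z', hz', m, hm, rfl⟩ := Submodule.mem_sup.1 hz
    obtain ⟨n, hn, e, he, rfl⟩ := Submodule.mem_sup.1 hz'
    simp only [map_add, inner_add_right, hN n hn, hE e he, hM m hm]
  · rw [hI, ← (hmem u).1 hu u, real_inner_self_eq_norm_sq]
    ring
end

section
/- Suppose E_k is one-dimensional. Then every (a, b) ∈ Q_k with ν(a) < b < μ(a) satisfies (a, b) ∉ Σ; that is, the open region between the minimal curve b = ν(a) and the maximal curve b = μ(a) contains no point of the Dancer–Fučík spectrum. -/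
open MeasureTheory RealInnerProductSpace

/-- The Fucik quadratic-type functional on `L²`. -/
noncomputable def fucikP {Ω : Type*} [MeasurableSpace Ω] {μ : Measure Ω} (f : Lp ℝ 2 μ)
    (a b : ℝ) : ℝ :=
  ∫ x, (b * (Lp.posPart f) x ^ 2 + a * (Lp.negPart f) x ^ 2) ∂μ

theorem fucik_intmul {Ω : Type*} [MeasurableSpace Ω] {μ : Measure Ω} (f g : Lp ℝ 2 μ) :
    Integrable (fun x => f x * g x) μ :=
  (Lp.memLp f).integrable_mul (Lp.memLp g)

theorem fucik_intP {Ω : Type*} [MeasurableSpace Ω] {μ : Measure Ω} (f : Lp ℝ 2 μ)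
    (a b : ℝ) :
    Integrable (fun x => b * (Lp.posPart f) x ^ 2 + a * (Lp.negPart f) x ^ 2) μ :=
  ((Lp.memLp (Lp.posPart f)).integrable_sq.const_mul b).add
    ((Lp.memLp (Lp.negPart f)).integrable_sq.const_mul a)

theorem fucik_intg {Ω : Type*} [MeasurableSpace Ω] {μ : Measure Ω} (f h : Lp ℝ 2 μ)
    (a b : ℝ) :
    Integrable (fun x => (b * (Lp.posPart f) x - a * (Lp.negPart f) x) * h x) μ := by
  have := ((fucik_intmul (Lp.posPart f) h).const_mul b).sub
    ((fucik_intmul (Lp.negPart f) h).const_mul a)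
  refine this.congr (Filter.Eventually.of_forall fun x => ?_)
  simp only [Pi.sub_apply]
  ring

theorem fucik_normsq {Ω : Type*} [MeasurableSpace Ω] {μ : Measure Ω} (h : Lp ℝ 2 μ) :
    ‖h‖ ^ 2 = ∫ x, h x ^ 2 ∂μ := by
  rw [← real_inner_self_eq_norm_sq, L2.inner_def]
  refine integral_congr_ae (Filter.Eventually.of_forall fun x => ?_)
  simp [pow_two]

theorem fucik_pt_lower (a b s t c : ℝ) (ha : c ≤ a) (hb : c ≤ b) :
    b * max s 0 ^ 2 + a * max (-s) 0 ^ 2 + 2 * ((b * max s 0 - a * max (-s) 0) * t) + c * t ^ 2 ≤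
      b * max (s + t) 0 ^ 2 + a * max (-(s + t)) 0 ^ 2 := by
  rcases le_total s 0 with h1 | h1 <;> rcases le_total (s + t) 0 with h2 | h2
  · rw [max_eq_right h1, max_eq_left (by linarith : (0:ℝ) ≤ -s), max_eq_right h2,
      max_eq_left (by linarith : (0:ℝ) ≤ -(s+t))]
    nlinarith [mul_nonneg (sub_nonneg.2 ha) (sq_nonneg t)]
  · rw [max_eq_right h1, max_eq_left (by linarith : (0:ℝ) ≤ -s), max_eq_left h2,
      max_eq_right (by linarith : -(s+t) ≤ (0:ℝ))]
    have e : (a - c) * ((-s) * (s + 2 * t)) ≥ 0 :=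
      mul_nonneg (sub_nonneg.2 ha) (mul_nonneg (by linarith) (by linarith))
    nlinarith [mul_nonneg (sub_nonneg.2 hb) (sq_nonneg (s + t))]
  · rw [max_eq_left h1, max_eq_right (by linarith : -s ≤ (0:ℝ)), max_eq_right h2,
      max_eq_left (by linarith : (0:ℝ) ≤ -(s+t))]
    have e : (b - c) * (s * (-(s + 2 * t))) ≥ 0 :=
      mul_nonneg (sub_nonneg.2 hb) (mul_nonneg (by linarith) (by linarith))
    nlinarith [mul_nonneg (sub_nonneg.2 ha) (sq_nonneg (s + t))]
  · rw [max_eq_left h1, max_eq_right (by linarith : -s ≤ (0:ℝ)), max_eq_left h2,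
      max_eq_right (by linarith : -(s+t) ≤ (0:ℝ))]
    nlinarith [mul_nonneg (sub_nonneg.2 hb) (sq_nonneg t)]

theorem fucik_lower {Ω : Type*} [MeasurableSpace Ω] {μ : Measure Ω} (f h : Lp ℝ 2 μ)
    (a b c : ℝ) (ha : c ≤ a) (hb : c ≤ b) :
    fucikP f a b + 2 * (∫ x, (b * (Lp.posPart f) x - a * (Lp.negPart f) x) * h x ∂μ)
      + c * ‖h‖ ^ 2 ≤ fucikP (f + h) a b := by
  have i1 := fucik_intP f a b
  have i2 := (fucik_intg f h a b).const_mul 2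
  have i3 := ((Lp.memLp h).integrable_sq).const_mul c
  have e1 := integral_add i1 i2
  have e2 := integral_add (i1.add i2) i3
  simp only [Pi.add_apply] at e2
  rw [fucik_normsq, fucikP, fucikP, ← integral_const_mul, ← integral_const_mul, ← e1, ← e2]
  refine integral_mono_ae ((i1.add i2).add i3) (fucik_intP _ a b) ?_
  filter_upwards [Lp.coeFn_posPart f, Lp.coeFn_negPart_eq_max f, Lp.coeFn_posPart (f + h),
    Lp.coeFn_negPart_eq_max (f + h), Lp.coeFn_add f h] with x h1 h2 h3 h4 h5
  simp only [Pi.add_apply, h1, h2, h3, h4, h5]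
  exact fucik_pt_lower a b (f x) (h x) c ha hb

theorem fucik_neg {Ω : Type*} [MeasurableSpace Ω] {μ : Measure Ω} (f : Lp ℝ 2 μ)
    (a b : ℝ) : fucikP f (-a) (-b) = - fucikP f a b := by
  rw [fucikP, fucikP, ← integral_neg]
  congr 1
  ext x
  ring

theorem fucik_upper {Ω : Type*} [MeasurableSpace Ω] {μ : Measure Ω} (f h : Lp ℝ 2 μ)
    (a b c : ℝ) (ha : a ≤ c) (hb : b ≤ c) :
    fucikP (f + h) a b ≤
    fucikP f a b + 2 * (∫ x, (b * (Lp.posPart f) x - a * (Lp.negPart f) x) * h x ∂μ)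
      + c * ‖h‖ ^ 2 := by
  have := fucik_lower f h (-a) (-b) (-c) (neg_le_neg ha) (neg_le_neg hb)
  rw [fucik_neg, fucik_neg] at this
  have e : (∫ x, (-b * (Lp.posPart f) x - -a * (Lp.negPart f) x) * h x ∂μ) =
      - (∫ x, (b * (Lp.posPart f) x - a * (Lp.negPart f) x) * h x ∂μ) := by
    rw [← integral_neg]
    congr 1
    ext x
    ring
  rw [e] at this
  linarith

theorem fucik_smul {Ω : Type*} [MeasurableSpace Ω] {μ : Measure Ω} (f : Lp ℝ 2 μ)
    (a b c : ℝ) (hc : 0 < c) : fucikP (c • f) a b = c ^ 2 * fucikP f a b := by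
  rw [fucikP, fucikP, ← integral_const_mul]
  refine integral_congr_ae ?_
  filter_upwards [Lp.coeFn_posPart f, Lp.coeFn_negPart_eq_max f, Lp.coeFn_posPart (c • f),
    Lp.coeFn_negPart_eq_max (c • f), Lp.coeFn_smul c f] with x h1 h2 h3 h4 h5
  simp only [h1, h2, h3, h4, h5, Pi.smul_apply, smul_eq_mul]
  have e1 : max (c * f x) 0 = c * max (f x) 0 := by
    rw [mul_max_of_nonneg _ _ hc.le, mul_zero]
  have e2 : max (-(c * f x)) 0 = c * max (-(f x)) 0 := by
    rw [mul_max_of_nonneg _ _ hc.le, mul_zero, mul_neg]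
  rw [e1, e2]
  ring

theorem fucik_self {Ω : Type*} [MeasurableSpace Ω] {μ : Measure Ω} (f : Lp ℝ 2 μ)
    (a b : ℝ) : (∫ x, (b * (Lp.posPart f) x - a * (Lp.negPart f) x) * f x ∂μ) =
      fucikP f a b := by
  rw [fucikP]
  refine integral_congr_ae ?_
  filter_upwards [Lp.coeFn_posPart f, Lp.coeFn_negPart_eq_max f] with x h1 h2
  simp only [h1, h2]
  rcases le_total (f x) 0 with h | h
  · rw [max_eq_right h, max_eq_left (by linarith : (0:ℝ) ≤ -f x)]
    ring
  · rw [max_eq_left h, max_eq_right (by linarith : -f x ≤ (0:ℝ))]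
    ring

theorem fucik_zero {Ω : Type*} [MeasurableSpace Ω] {μ : Measure Ω} (a b : ℝ) :
    fucikP (0 : Lp ℝ 2 μ) a b = 0 := by
  have := fucik_smul (0 : Lp ℝ 2 μ) a b 2 (by norm_num)
  rw [smul_zero] at this
  linarith

theorem fucik_zero_lin {Ω : Type*} [MeasurableSpace Ω] {μ : Measure Ω} (h : Lp ℝ 2 μ) (a b : ℝ) :
    (∫ x, (b * (Lp.posPart (0 : Lp ℝ 2 μ)) x - a * (Lp.negPart (0 : Lp ℝ 2 μ)) x) * h x ∂μ)
      = 0 := by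
  rw [← integral_zero Ω ℝ (μ := μ)]
  refine integral_congr_ae ?_
  filter_upwards [Lp.coeFn_posPart (0 : Lp ℝ 2 μ), Lp.coeFn_negPart_eq_max (0 : Lp ℝ 2 μ),
    Lp.coeFn_zero ℝ 2 μ] with x h1 h2 h3
  have h4 : (0 : Lp ℝ 2 μ) x = 0 := h3
  rw [h1, h2, h4]
  simp

theorem region_II_spectrum_free_of_simple_eigenvalue
    {Ω : Type*} [MeasurableSpace Ω] (μ : Measure Ω)
    {H : Type*} [NormedAddCommGroup H] [InnerProductSpace ℝ H] [CompleteSpace H]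
    (ι : H →ₗ[ℝ] Lp ℝ 2 μ) (hι : Function.Injective ι)
    (C : ℝ) (hC : 0 < C) (hιC : ∀ u : H, ‖ι u‖ ≤ C * ‖u‖)
    (I : H → ℝ → ℝ → ℝ)
    (hI : ∀ u a b, I u a b = ‖u‖ ^ 2 / 2 -
      (∫ x, (b * (Lp.posPart (ι u)) x ^ 2 + a * (Lp.negPart (ι u)) x ^ 2) ∂μ) / 2)
    (lam₀ lam₁ lam₂ : ℝ) (hlam₀ : 0 < lam₀) (hlam₀₁ : lam₀ < lam₁) (hlam₁₂ : lam₁ < lam₂)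
    (N E M : Submodule ℝ H)
    (hNcl : IsClosed (N : Set H)) (hEcl : IsClosed (E : Set H)) (hMcl : IsClosed (M : Set H))
    (hNfd : FiniteDimensional ℝ N) (hEfd : FiniteDimensional ℝ E) (hEne : E ≠ ⊥)
    (horthNE : ∀ v ∈ N, ∀ y ∈ E, ⟪v, y⟫ = 0)
    (horthNM : ∀ v ∈ N, ∀ w ∈ M, ⟪v, w⟫ = 0)
    (horthEM : ∀ y ∈ E, ∀ w ∈ M, ⟪y, w⟫ = 0)
    (horthNE2 : ∀ v ∈ N, ∀ y ∈ E, ∫ x, (ι v) x * (ι y) x ∂μ = 0)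
    (horthNM2 : ∀ v ∈ N, ∀ w ∈ M, ∫ x, (ι v) x * (ι w) x ∂μ = 0)
    (horthEM2 : ∀ y ∈ E, ∀ w ∈ M, ∫ x, (ι y) x * (ι w) x ∂μ = 0)
    (hdirect : N ⊔ E ⊔ M = ⊤)
    (hNspec : ∀ v ∈ N, ‖v‖ ^ 2 ≤ lam₀ * ‖ι v‖ ^ 2)
    (hEspec : ∀ y ∈ E, ∀ u : H, ⟪y, u⟫ = lam₁ * ∫ x, (ι y) x * (ι u) x ∂μ)
    (hMspec : ∀ w ∈ M, lam₂ * ‖ι w‖ ^ 2 ≤ ‖w‖ ^ 2)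
    (hcompact : ∀ s : Set H, Bornology.IsBounded s →
      IsCompact (closure ((fun u => ι u) '' s)))
    (Sig : Set (ℝ × ℝ))
    (hSig : Sig = {q : ℝ × ℝ | ∃ u : H, u ≠ 0 ∧ ∀ v : H,
      ⟪u, v⟫ = ∫ x, (q.2 * (Lp.posPart (ι u)) x - q.1 * (Lp.negPart (ι u)) x) * (ι v) x ∂μ})
    (n m : ℝ → ℝ → ℝ)
    (hn : ∀ a b, n a b = sInf {t : ℝ | ∃ w ∈ E ⊔ M, ‖w‖ = 1 ∧
      t = sSup {r : ℝ | ∃ v ∈ N, r = I (v + w) a b}})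
    (hm : ∀ a b, m a b = sSup {t : ℝ | ∃ v ∈ N ⊔ E, ‖v‖ = 1 ∧
      t = sInf {r : ℝ | ∃ w ∈ M, r = I (v + w) a b}})
    (ν μf : ℝ → ℝ)
    (hν : ∀ a, ν a = sSup {b ∈ Set.Ioo lam₀ lam₂ | 0 ≤ n a b})
    (hμf : ∀ a, μf a = sInf {b ∈ Set.Ioo lam₀ lam₂ | m a b ≤ 0})
    (hsimple : Module.finrank ℝ E = 1) :
    ∀ a b, a ∈ Set.Ioo lam₀ lam₂ → b ∈ Set.Ioo lam₀ lam₂ →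
      ν a < b → b < μf a → (a, b) ∉ Sig := by
  rintro a b ⟨ha0, ha2⟩ ⟨hb0, hb2⟩ hνb hbμ hmem
  have hI' : ∀ u, I u a b = ‖u‖ ^ 2 / 2 - fucikP (ι u) a b / 2 := fun u => hI u a b
  have hn0 : n a b < 0 := by
    by_contra hcon
    have : b ≤ ν a := by
      rw [hν]
      exact le_csSup ⟨lam₂, fun x hx => hx.1.2.le⟩ ⟨⟨hb0, hb2⟩, not_lt.1 hcon⟩
    linarith
  have hm0 : 0 < m a b := by
    by_contra hcon
    have : μf a ≤ b := by
      rw [hμf]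
      exact csInf_le ⟨lam₀, fun x hx => hx.1.1.le⟩ ⟨⟨hb0, hb2⟩, not_lt.1 hcon⟩
    linarith
  -- bounds on `M` and `N`
  have hmax : max a b < lam₂ := max_lt ha2 hb2
  have hmin : lam₀ < min a b := lt_min ha0 hb0
  have hιpos : ∀ u : H, u ≠ 0 → 0 < ‖ι u‖ ^ 2 := fun u hu => by
    have : ι u ≠ 0 := fun h => hu (hι (by rw [h, map_zero]))
    positivity
  have hIM : ∀ w ∈ M, w ≠ 0 → 0 < I w a b := by
    intro w hw hw0
    have h1 := fucik_upper (0 : Lp ℝ 2 μ) (ι w) a b (max a b) (le_max_left _ _) (le_max_right _ _)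
    rw [zero_add (ι w), fucik_zero, fucik_zero_lin] at h1
    have h2 := hMspec w hw
    have h3 := mul_pos (sub_pos.2 hmax) (hιpos w hw0)
    rw [hI']
    nlinarith
  have hIN : ∀ v ∈ N, v ≠ 0 → I v a b < 0 := by
    intro w hw hw0
    have h1 := fucik_lower (0 : Lp ℝ 2 μ) (ι w) a b (min a b) (min_le_left _ _) (min_le_right _ _)
    rw [zero_add (ι w), fucik_zero, fucik_zero_lin] at h1
    have h2 := hNspec w hw
    have h3 := mul_pos (sub_pos.2 hmin) (hιpos w hw0)
    rw [hI']
    nlinarith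
  have hI0 : I 0 a b = 0 := by
    rw [hI', map_zero, fucik_zero]; simp
  have hIs : ∀ u c, 0 < c → I (c • u) a b = c ^ 2 * I u a b := by
    intro u c hc
    rw [hI', hI', map_smul, fucik_smul _ _ _ _ hc, norm_smul, mul_pow, Real.norm_eq_abs, sq_abs]
    ring
  -- the solution
  rw [hSig] at hmem
  obtain ⟨u, hu0, hu⟩ := hmem
  simp only at hu
  have hIu : ‖u‖ ^ 2 = fucikP (ι u) a b := by
    rw [← fucik_self, ← hu u, real_inner_self_eq_norm_sq]
  have hsN : ∀ h ∈ N, I (u + h) a b ≤ 0 := by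
    intro h hh
    have h1 := fucik_lower (ι u) (ι h) a b (min a b) (min_le_left _ _) (min_le_right _ _)
    rw [← hu h] at h1
    have h2 := hNspec h hh
    have h3 := mul_nonneg (sub_pos.2 hmin).le (sq_nonneg ‖ι h‖)
    rw [hI', map_add, norm_add_sq_real]
    nlinarith
  have hsM : ∀ h ∈ M, 0 ≤ I (u + h) a b := by
    intro h hh
    have h1 := fucik_upper (ι u) (ι h) a b (max a b) (le_max_left _ _) (le_max_right _ _)
    rw [← hu h] at h1
    have h2 := hMspec h hh
    have h3 := mul_nonneg (sub_pos.2 hmax).le (sq_nonneg ‖ι h‖)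
    rw [hI', map_add, norm_add_sq_real]
    nlinarith
  -- decomposition of the solution
  have hutop : u ∈ N ⊔ E ⊔ M := by rw [hdirect]; trivial
  obtain ⟨p, hp, w0, hw0, rfl⟩ := Submodule.mem_sup.1 hutop
  obtain ⟨v0, hv0, y, hy, rfl⟩ := Submodule.mem_sup.1 hp
  have hsN' : ∀ v ∈ N, I (v + y + w0) a b ≤ 0 := by
    intro v hv
    have := hsN (v - v0) (N.sub_mem hv hv0)
    rwa [show v0 + y + w0 + (v - v0) = v + y + w0 by abel] at this
  have hsM' : ∀ w ∈ M, 0 ≤ I (v0 + y + w) a b := by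
    intro w hw
    have := hsM (w - w0) (M.sub_mem hw hw0)
    rwa [show v0 + y + w0 + (w - w0) = v0 + y + w by abel] at this
  -- consequence of `n a b < 0`
  obtain ⟨y1, hy1, w1, hw1, hneg⟩ : ∃ y1 ∈ E, ∃ w1 ∈ M, ∀ v ∈ N, I (v + y1 + w1) a b < 0 := by
    by_contra hcon
    push Not at hcon
    refine absurd hn0 (not_lt.2 ?_)
    rw [hn]
    refine Real.sInf_nonneg ?_
    rintro t ⟨w, hw, -, rfl⟩
    obtain ⟨y1, hy1, w1, hw1, rfl⟩ := Submodule.mem_sup.1 hw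
    obtain ⟨v, hv, hvI⟩ := hcon y1 hy1 w1 hw1
    refine Real.sSup_nonneg' ⟨_, ⟨v, hv, rfl⟩, ?_⟩
    rwa [← add_assoc]
  obtain ⟨v2, hv2, y2, hy2, hpos⟩ : ∃ v2 ∈ N, ∃ y2 ∈ E, ∀ w ∈ M, 0 < I (v2 + y2 + w) a b := by
    by_contra hcon
    push Not at hcon
    refine absurd hm0 (not_lt.2 ?_)
    rw [hm]
    refine Real.sSup_nonpos ?_
    rintro t ⟨v, hv, -, rfl⟩
    obtain ⟨v2, hv2, y2, hy2, rfl⟩ := Submodule.mem_sup.1 hv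
    obtain ⟨w, hw, hwI⟩ := hcon v2 hv2 y2 hy2
    exact Real.sInf_nonpos' ⟨_, ⟨w, hw, rfl⟩, hwI⟩
  -- parametrize `E`
  obtain ⟨e, he, hspan⟩ := finrank_eq_one_iff'.1 hsimple
  have hspan' : ∀ z ∈ E, ∃ c : ℝ, z = c • (e : H) := fun z hz => by
    obtain ⟨c, hc⟩ := hspan ⟨z, hz⟩
    exact ⟨c, by rw [← Submodule.coe_smul, hc]⟩
  obtain ⟨s, rfl⟩ := hspan' y hy
  obtain ⟨s1, rfl⟩ := hspan' y1 hy1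
  obtain ⟨s2, rfl⟩ := hspan' y2 hy2
  have hs1 : s1 ≠ 0 := by
    rintro rfl
    have := hneg 0 N.zero_mem
    rw [zero_smul, add_zero, zero_add] at this
    by_cases hw : w1 = 0
    · rw [hw, hI0] at this; exact lt_irrefl _ this
    · linarith [hIM w1 hw1 hw]
  have hs2 : s2 ≠ 0 := by
    rintro rfl
    have := hpos 0 M.zero_mem
    rw [zero_smul, add_zero, add_zero] at this
    by_cases hv : v2 = 0
    · rw [hv, hI0] at this; exact lt_irrefl _ this
    · linarith [hIN v2 hv2 hv]
  have hs : s ≠ 0 := by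
    rintro rfl
    have h1 := hsN' 0 N.zero_mem
    have h2 := hsM' 0 M.zero_mem
    simp only [zero_smul, add_zero, zero_add] at h1 h2 hu0
    have hw : w0 = 0 := by
      by_contra hw
      linarith [hIM w0 hw0 hw]
    have hv : v0 = 0 := by
      by_contra hv
      linarith [hIN v0 hv0 hv]
    exact hu0 (by rw [hw, hv, add_zero])
  -- same sign comparisons
  have c1 : ¬ 0 < s1 / s := by
    intro hc
    have h1 := hneg ((s1 / s) • v0) (N.smul_mem _ hv0)
    have h2 := hsM' ((s1 / s)⁻¹ • w1) (M.smul_mem _ hw1)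
    have h3 := hIs (v0 + s • (e : H) + (s1 / s)⁻¹ • w1) (s1 / s) hc
    rw [smul_add, smul_add, smul_smul, smul_smul, mul_inv_cancel₀ hc.ne', one_smul,
      div_mul_cancel₀ _ hs] at h3
    have := mul_nonneg (sq_nonneg (s1 / s)) h2
    linarith
  have c2 : ¬ 0 < s2 / s := by
    intro hc
    have h1 := hpos ((s2 / s) • w0) (M.smul_mem _ hw0)
    have h2 := hsN' ((s2 / s)⁻¹ • v2) (N.smul_mem _ hv2)
    have h3 := hIs ((s2 / s)⁻¹ • v2 + s • (e : H) + w0) (s2 / s) hc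
    rw [smul_add, smul_add, smul_smul, smul_smul, mul_inv_cancel₀ hc.ne', one_smul,
      div_mul_cancel₀ _ hs] at h3
    have := mul_nonneg (sq_nonneg (s2 / s)) (neg_nonneg.2 h2)
    linarith
  have c3 : ¬ 0 < s1 / s2 := by
    intro hc
    have h1 := hneg ((s1 / s2) • v2) (N.smul_mem _ hv2)
    have h2 := hpos ((s1 / s2)⁻¹ • w1) (M.smul_mem _ hw1)
    have h3 := hIs (v2 + s2 • (e : H) + (s1 / s2)⁻¹ • w1) (s1 / s2) hc
    rw [smul_add, smul_add, smul_smul, smul_smul, mul_inv_cancel₀ hc.ne', one_smul,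
      div_mul_cancel₀ _ hs2] at h3
    have := mul_pos (pow_pos hc 2) h2
    linarith
  have d1 : s1 / s < 0 := lt_of_le_of_ne (not_lt.1 c1) (div_ne_zero hs1 hs)
  have d2 : s2 / s < 0 := lt_of_le_of_ne (not_lt.1 c2) (div_ne_zero hs2 hs)
  apply c3
  have := div_pos_of_neg_of_neg d1 d2
  rwa [div_div_div_cancel_right₀ hs] at this
end

section
/- For every (a, b) ∈ Q_k, the equality K(a, b) = S_k(a, b) ∩ S^k(a, b) holds if and only if b = ν(a) and b = μ(a), i.e., if and only if (a, b) lies on both the minimal curve b = ν(a) and the maximal curve b = μ(a). -/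
open MeasureTheory RealInnerProductSpace

namespace DF

structure Dat (H L : Type*) [NormedAddCommGroup H] [InnerProductSpace ℝ H]
    [NormedAddCommGroup L] [InnerProductSpace ℝ L] where
  ι : H →ₗ[ℝ] L
  inj : Function.Injective ι
  C : ℝ
  bound : ∀ u : H, ‖ι u‖ ≤ C * ‖u‖
  P : H → L
  Q : H → L
  PQ : ∀ u, P u - Q u = ι u
  orth : ∀ u, ⟪P u, Q u⟫ = 0
  nonneg : ∀ u v, 0 ≤ ⟪P u, Q v⟫
  Psmul : ∀ (t : ℝ) u, 0 ≤ t → P (t • u) = t • P u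
  Qsmul : ∀ (t : ℝ) u, 0 ≤ t → Q (t • u) = t • Q u
  Pneg : ∀ u, P (-u) = Q u
  Pcont : Continuous P
  Qcont : Continuous Q
  l0 : ℝ
  l1 : ℝ
  l2 : ℝ
  hl0 : 0 < l0
  N : Submodule ℝ H
  E : Submodule ℝ H
  M : Submodule ℝ H
  Nfd : FiniteDimensional ℝ N
  Ene : E ≠ ⊥
  NE : ∀ v ∈ N, ∀ y ∈ E, ⟪v, y⟫ = 0
  NM : ∀ v ∈ N, ∀ w ∈ M, ⟪v, w⟫ = 0
  EM : ∀ y ∈ E, ∀ w ∈ M, ⟪y, w⟫ = 0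
  NE2 : ∀ v ∈ N, ∀ y ∈ E, ⟪ι v, ι y⟫ = 0
  NM2 : ∀ v ∈ N, ∀ w ∈ M, ⟪ι v, ι w⟫ = 0
  EM2 : ∀ y ∈ E, ∀ w ∈ M, ⟪ι y, ι w⟫ = 0
  top : N ⊔ E ⊔ M = ⊤
  Nspec : ∀ v ∈ N, ‖v‖ ^ 2 ≤ l0 * ‖ι v‖ ^ 2
  Espec : ∀ y ∈ E, ∀ u : H, ⟪y, u⟫ = l1 * ⟪ι y, ι u⟫
  Mspec : ∀ w ∈ M, l2 * ‖ι w‖ ^ 2 ≤ ‖w‖ ^ 2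

namespace Dat

variable {H L : Type*} [NormedAddCommGroup H] [InnerProductSpace ℝ H]
    [NormedAddCommGroup L] [InnerProductSpace ℝ L] (S : Dat H L)

noncomputable def J (a b : ℝ) (u : H) : ℝ :=
  (‖u‖ ^ 2 - (b * ‖S.P u‖ ^ 2 + a * ‖S.Q u‖ ^ 2)) / 2

noncomputable def D (a b : ℝ) (u h : H) : ℝ :=
  ⟪u, h⟫ - ⟪b • S.P u - a • S.Q u, S.ι h⟫

lemma D_add (a b : ℝ) (u h k : H) : S.D a b u (h + k) = S.D a b u h + S.D a b u k := by
  simp only [D, inner_add_right, map_add]; ring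

lemma D_smul (a b t : ℝ) (u h : H) : S.D a b u (t • h) = t * S.D a b u h := by
  simp only [D, inner_smul_right, map_smul]; ring

lemma D_neg (a b : ℝ) (u h : H) : S.D a b u (-h) = - S.D a b u h := by
  simp only [D, inner_neg_right, map_neg]; ring

lemma J_expand (a b : ℝ) (u d : H) :
    S.J a b (u + d) = S.J a b u + S.D a b u d + ‖d‖ ^ 2 / 2
      - (b * ‖S.P (u+d) - S.P u‖ ^ 2 + a * ‖S.Q (u+d) - S.Q u‖ ^ 2
        + 2 * b * ⟪S.P u, S.Q (u+d)⟫ + 2 * a * ⟪S.P (u+d), S.Q u⟫) / 2 := by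
  have h1 : S.ι d = (S.P (u+d) - S.Q (u+d)) - (S.P u - S.Q u) := by
    rw [S.PQ, S.PQ, map_add]; abel
  have o1 := S.orth u
  have o2 := S.orth (u+d)
  simp only [J, D, h1, ← real_inner_self_eq_norm_sq]
  generalize S.P (u+d) = p' at *
  generalize S.Q (u+d) = q' at *
  generalize S.P u = p at *
  generalize S.Q u = q at *
  simp only [inner_add_left, inner_add_right, inner_sub_left, inner_sub_right,
    real_inner_smul_left]
  rw [real_inner_comm u d, real_inner_comm p p', real_inner_comm q q', real_inner_comm p q,
    real_inner_comm p' q] at *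
  linear_combination (a + b) * o1

lemma ι_sq (u d : H) : ‖S.ι d‖ ^ 2 = ‖S.P (u+d) - S.P u‖ ^ 2 + ‖S.Q (u+d) - S.Q u‖ ^ 2
      + 2 * ⟪S.P u, S.Q (u+d)⟫ + 2 * ⟪S.P (u+d), S.Q u⟫ := by
  have h1 : S.ι d = (S.P (u+d) - S.Q (u+d)) - (S.P u - S.Q u) := by
    rw [S.PQ, S.PQ, map_add]; abel
  have o1 := S.orth u
  have o2 := S.orth (u+d)
  simp only [h1, ← real_inner_self_eq_norm_sq]
  generalize S.P (u+d) = p' at *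
  generalize S.Q (u+d) = q' at *
  generalize S.P u = p at *
  generalize S.Q u = q at *
  simp only [inner_sub_left, inner_sub_right]
  have e1 := real_inner_comm p p'
  have e2 := real_inner_comm q q'
  have e3 := real_inner_comm p q
  have e4 := real_inner_comm p' q'
  have e5 := real_inner_comm p' q
  have e6 := real_inner_comm p q'
  linarith

lemma J_le (a b c : ℝ) (hca : c ≤ a) (hcb : c ≤ b) (u d : H) :
    S.J a b (u + d) ≤ S.J a b u + S.D a b u d + (‖d‖ ^ 2 - c * ‖S.ι d‖ ^ 2) / 2 := by
  rw [S.J_expand, S.ι_sq u d]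
  have h1 := mul_nonneg (sub_nonneg.2 hcb) (sq_nonneg ‖S.P (u+d) - S.P u‖)
  have h2 := mul_nonneg (sub_nonneg.2 hca) (sq_nonneg ‖S.Q (u+d) - S.Q u‖)
  have h3 := mul_nonneg (sub_nonneg.2 hcb) (S.nonneg u (u+d))
  have h4 := mul_nonneg (sub_nonneg.2 hca) (S.nonneg (u+d) u)
  linarith

lemma le_J (a b c : ℝ) (hca : a ≤ c) (hcb : b ≤ c) (u d : H) :
    S.J a b u + S.D a b u d + (‖d‖ ^ 2 - c * ‖S.ι d‖ ^ 2) / 2 ≤ S.J a b (u + d) := by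
  rw [S.J_expand, S.ι_sq u d]
  have h1 := mul_nonneg (sub_nonneg.2 hcb) (sq_nonneg ‖S.P (u+d) - S.P u‖)
  have h2 := mul_nonneg (sub_nonneg.2 hca) (sq_nonneg ‖S.Q (u+d) - S.Q u‖)
  have h3 := mul_nonneg (sub_nonneg.2 hcb) (S.nonneg u (u+d))
  have h4 := mul_nonneg (sub_nonneg.2 hca) (S.nonneg (u+d) u)
  linarith

lemma P_zero : S.P 0 = 0 := by simpa using S.Psmul 0 0 le_rfl
lemma Q_zero : S.Q 0 = 0 := by simpa using S.Qsmul 0 0 le_rfl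
lemma J_zero (a b : ℝ) : S.J a b 0 = 0 := by simp [J, P_zero, Q_zero]

lemma J_smul (a b t : ℝ) (ht : 0 ≤ t) (u : H) : S.J a b (t • u) = t ^ 2 * S.J a b u := by
  simp only [J, S.Psmul t u ht, S.Qsmul t u ht, norm_smul, mul_pow, Real.norm_eq_abs, sq_abs]
  ring

lemma D_self (a b : ℝ) (u : H) : S.D a b u u = 2 * S.J a b u := by
  have o := S.orth u
  have o' := real_inner_comm (S.P u) (S.Q u)
  simp only [D, J, ← S.PQ, ← real_inner_self_eq_norm_sq]
  simp only [inner_sub_left, inner_sub_right, real_inner_smul_left, o', o]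
  ring

lemma J_b (a b b' : ℝ) (u : H) : S.J a b' u = S.J a b u + (b - b') / 2 * ‖S.P u‖ ^ 2 := by
  simp only [J]; ring

lemma P_le (u : H) : ‖S.P u‖ ^ 2 ≤ ‖S.ι u‖ ^ 2 := by
  rw [← S.PQ, norm_sub_sq_real, S.orth]
  nlinarith [sq_nonneg ‖S.Q u‖]

lemma J_cont (a b : ℝ) : Continuous (S.J a b) := by
  have := S.Pcont
  have := S.Qcont
  unfold J
  fun_prop

lemma eq_zero_of_sq {d k : ℝ} (h : ∀ s : ℝ, s * d ≤ s ^ 2 * k) : d = 0 := by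
  by_contra hd
  have hk : 0 < |k| + 1 := by positivity
  have h1 := h (d / (|k| + 1))
  have h2 : 0 < d ^ 2 := by positivity
  have h3 : d / (|k|+1) * d = d ^ 2 / (|k|+1) := by ring
  have h4 : (d / (|k| + 1)) ^ 2 * k = d ^ 2 / (|k|+1) * (k / (|k|+1)) := by field_simp
  rw [h3, h4] at h1
  have h5 : k / (|k|+1) < 1 := by
    rw [div_lt_one hk]; linarith [le_abs_self k]
  have h6 : 0 < d ^ 2 / (|k|+1) := by positivity
  nlinarith

lemma D_zero_of_max {a b : ℝ} (V : Submodule ℝ H) (u : H)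
    (h : ∀ v ∈ V, S.J a b (u + v) ≤ S.J a b u) : ∀ v ∈ V, S.D a b u v = 0 := by
  intro v hv
  apply eq_zero_of_sq (k := -(‖v‖ ^ 2 - max a b * ‖S.ι v‖ ^ 2) / 2)
  intro s
  have h1 := h (s • v) (V.smul_mem s hv)
  have h2 := S.le_J a b (max a b) (le_max_left _ _) (le_max_right _ _) u (s • v)
  rw [D_smul, map_smul, norm_smul, norm_smul, mul_pow, mul_pow, Real.norm_eq_abs, sq_abs] at h2
  linarith

lemma D_zero_of_min {a b : ℝ} (V : Submodule ℝ H) (u : H)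
    (h : ∀ v ∈ V, S.J a b u ≤ S.J a b (u + v)) : ∀ v ∈ V, S.D a b u v = 0 := by
  intro v hv
  apply eq_zero_of_sq (k := (‖v‖ ^ 2 - min a b * ‖S.ι v‖ ^ 2) / 2)
  intro s
  have h1 := h (-s • v) (V.smul_mem _ hv)
  have h2 := S.J_le a b (min a b) (min_le_left _ _) (min_le_right _ _) u (-s • v)
  rw [D_smul, map_smul, norm_smul, norm_smul, mul_pow, mul_pow, Real.norm_eq_abs, sq_abs] at h2
  linarith

lemma max_strong {a b c : ℝ} (ha : c ≤ a) (hb : c ≤ b) (u : H)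
    (h : ∀ v ∈ S.N, S.D a b u v = 0) (v : H) (hv : v ∈ S.N) :
    S.J a b (u + v) ≤ S.J a b u - (c - S.l0) / 2 * ‖S.ι v‖ ^ 2 := by
  have h1 := S.J_le a b c ha hb u v
  have h2 := S.Nspec v hv
  rw [h v hv] at h1
  linarith

lemma min_strong {a b c : ℝ} (ha : a ≤ c) (hb : b ≤ c) (u : H)
    (h : ∀ v ∈ S.M, S.D a b u v = 0) (v : H) (hv : v ∈ S.M) :
    S.J a b u + (S.l2 - c) / 2 * ‖S.ι v‖ ^ 2 ≤ S.J a b (u + v) := by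
  have h1 := S.le_J a b c ha hb u v
  have h2 := S.Mspec v hv
  rw [h v hv] at h1
  linarith

lemma ι_pos {v : H} (hv : v ≠ 0) : 0 < ‖S.ι v‖ ^ 2 := by
  have : S.ι v ≠ 0 := fun h => hv (S.inj (by simpa using h))
  positivity

def Nc (a b : ℝ) : Prop := ∀ w ∈ S.E ⊔ S.M, ∃ v ∈ S.N, 0 ≤ S.J a b (v + w)
def Mc (a b : ℝ) : Prop := ∀ v ∈ S.N ⊔ S.E, ∃ w ∈ S.M, S.J a b (v + w) ≤ 0

lemma decomp (u : H) : ∃ v ∈ S.N, ∃ y ∈ S.E, ∃ w ∈ S.M, u = v + y + w := by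
  have : u ∈ S.N ⊔ S.E ⊔ S.M := by rw [S.top]; trivial
  obtain ⟨x, hx, w, hw, rfl⟩ := Submodule.mem_sup.1 this
  obtain ⟨v, hv, y, hy, rfl⟩ := Submodule.mem_sup.1 hx
  exact ⟨v, hv, y, hy, w, hw, rfl⟩

/-- Both sign conditions force critical points. -/
lemma L1 {a b : ℝ} (ha : a ∈ Set.Ioo S.l0 S.l2) (hb : b ∈ Set.Ioo S.l0 S.l2)
    (hN : S.Nc a b) (hM : S.Mc a b) (u : H)
    (h1 : ∀ v ∈ S.N, S.D a b u v = 0) (h2 : ∀ v ∈ S.M, S.D a b u v = 0) :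
    ∀ h, S.D a b u h = 0 := by
  obtain ⟨v, hv, y, hy, w, hw, rfl⟩ := S.decomp u
  have hJ : S.J a b (v + y + w) ≤ 0 := by
    obtain ⟨w', hw', h⟩ := hM (v + y) (Submodule.add_mem_sup hv hy)
    have := S.min_strong (c := S.l2) ha.2.le hb.2.le _ h2 (w' - w) (S.M.sub_mem hw' hw)
    rw [show v + y + w + (w' - w) = v + y + w' by abel] at this
    linarith
  have hE : ∀ h ∈ S.E, S.D a b (v + y + w) h = 0 := by
    intro h hh
    apply eq_zero_of_sq (k := ‖h‖ ^ 2 / 2)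
    intro s
    obtain ⟨v', hv', h3⟩ := hN (y - s • h + w)
      (Submodule.add_mem_sup (S.E.sub_mem hy (S.E.smul_mem s hh)) hw)
    have h4 := S.J_le a b S.l0 ha.1.le hb.1.le (v + y + w) ((v' - v) + (-s) • h)
    have hvv := S.N.sub_mem hv' hv
    rw [show v + y + w + ((v' - v) + (-s) • h) = v' + (y - s • h + w) by
      rw [neg_smul]; abel, D_add, D_smul, h1 _ hvv, map_add, map_smul, norm_add_sq_real,
      norm_add_sq_real, inner_smul_right, inner_smul_right, S.NE _ hvv _ hh, S.NE2 _ hvv _ hh,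
      norm_smul, norm_smul, mul_pow, mul_pow, Real.norm_eq_abs, sq_abs] at h4
    have h5 := S.Nspec _ hvv
    have h6 : 0 ≤ S.l0 * (s ^ 2 * ‖S.ι h‖ ^ 2) := by have := S.hl0; positivity
    nlinarith
  intro h
  obtain ⟨v', hv', y', hy', w', hw', rfl⟩ := S.decomp h
  rw [D_add, D_add, h1 _ hv', hE _ hy', h2 _ hw']; simp

/-- Saddle points exist over every element of `E`. -/
lemma L2 {a b : ℝ} (ha : a ∈ Set.Ioo S.l0 S.l2) (hb : b ∈ Set.Ioo S.l0 S.l2)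
    (τ : H → H) (hτ : ∀ v ∈ S.N ⊔ S.E, τ v ∈ S.M ∧ ∀ w ∈ S.M, S.J a b (v + τ v) ≤ S.J a b (v + w))
    (y : H) (hy : y ∈ S.E) : ∃ v ∈ S.N, ∃ w ∈ S.M,
      (∀ h ∈ S.N, S.D a b (v + y + w) h = 0) ∧ (∀ h ∈ S.M, S.D a b (v + y + w) h = 0) := by
  have hmem : ∀ v ∈ S.N, v + y ∈ S.N ⊔ S.E := fun v hv => Submodule.add_mem_sup hv hy
  let g : S.N → ℝ := fun v => S.J a b (v + y + τ (v + y))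
  have husc : UpperSemicontinuous g := by
    rw [upperSemicontinuous_iff_isClosed_preimage]
    intro t
    have : g ⁻¹' Set.Ici t = ⋂ w : S.M, {v : S.N | t ≤ S.J a b (v + y + w)} := by
      ext v
      simp only [Set.mem_preimage, Set.mem_Ici, Set.mem_iInter, Set.mem_ofPred_eq, g]
      constructor
      · intro h w
        exact h.trans ((hτ _ (hmem v v.2)).2 w w.2)
      · intro h
        exact h ⟨_, (hτ _ (hmem v v.2)).1⟩
    rw [this]
    refine isClosed_iInter fun w => isClosed_le continuous_const ?_
    exact (S.J_cont a b).comp (by fun_prop)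
  -- coercivity
  have hmax : ∃ v0 : S.N, ∀ v : S.N, g v ≤ g v0 := by
    have := S.Nfd
    have : ProperSpace S.N := FiniteDimensional.proper ℝ S.N
    set c := min a b with hc
    have hc0 : S.l0 < c := lt_min ha.1 hb.1
    have hl := S.hl0
    -- bound of D
    obtain ⟨B, hB0, hB⟩ : ∃ B, 0 ≤ B ∧ ∀ h : H, S.D a b y h ≤ B * ‖h‖ := by
      refine ⟨‖y‖ + ‖b • S.P y - a • S.Q y‖ * |S.C|, by positivity, fun h => ?_⟩
      have e1 := real_inner_le_norm y h
      have e2 := neg_le_of_abs_le (abs_real_inner_le_norm (b • S.P y - a • S.Q y) (S.ι h))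
      have e3 : ‖S.ι h‖ ≤ |S.C| * ‖h‖ :=
        (S.bound h).trans (mul_le_mul_of_nonneg_right (le_abs_self _) (norm_nonneg _))
      have e4 := mul_le_mul_of_nonneg_left e3 (norm_nonneg (b • S.P y - a • S.Q y))
      unfold D
      linarith
    set κ := (c / S.l0 - 1) / 2 with hκ
    have hκ0 : 0 < κ := by
      have : 1 < c / S.l0 := by rw [lt_div_iff₀ hl]; linarith
      rw [hκ]; linarith
    have hub : ∀ v : S.N, g v ≤ S.J a b y + B * ‖v‖ - κ * ‖v‖ ^ 2 := by
      intro v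
      have e1 := (hτ _ (hmem v v.2)).2 0 S.M.zero_mem
      have e2 := S.J_le a b c (min_le_left _ _) (min_le_right _ _) y v
      have e3 := hB v
      have e4 := S.Nspec v v.2
      have e5 : c / S.l0 * ‖(v:H)‖ ^ 2 ≤ c * ‖S.ι v‖ ^ 2 := by
        rw [div_mul_eq_mul_div, div_le_iff₀ hl]
        have : 0 ≤ c := by linarith
        nlinarith [mul_le_mul_of_nonneg_left e4 this]
      rw [add_zero, add_comm (v:H) y] at e1
      have e6 : g v ≤ S.J a b (y + v) := by
        simp only [g]; rw [add_comm (v:H) y]; exact e1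
      have e7 : ‖v‖ = ‖(v:H)‖ := rfl
      rw [e7]
      have e8 : κ * ‖(v:H)‖ ^ 2 = (c / S.l0 * ‖(v:H)‖ ^ 2 - ‖(v:H)‖ ^ 2) / 2 := by rw [hκ]; ring
      linarith
    set A := |S.J a b y - g 0| with hA
    set R := (B + A) / κ + 1 with hR
    have hR1 : 1 ≤ R := by
      have : 0 ≤ (B + A) / κ := by positivity
      linarith
    obtain ⟨v0, hv0, hv0m⟩ := (husc.upperSemicontinuousOn (Metric.closedBall 0 R)).exists_isMaxOn
      ⟨0, by simp; linarith⟩ (isCompact_closedBall (0 : S.N) R)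
    refine ⟨v0, fun v => ?_⟩
    by_cases hv : ‖v‖ ≤ R
    · exact hv0m (by simpa using hv)
    · push Not at hv
      have e0 : g 0 ≤ g v0 := hv0m (by simp; linarith)
      have e1 := hub v
      have e2 : B + A ≤ κ * ‖v‖ := by
        have : κ * R = B + A + κ := by rw [hR]; field_simp
        nlinarith
      have e3 : (B + A) * ‖v‖ ≤ κ * ‖v‖ * ‖v‖ := mul_le_mul_of_nonneg_right e2 (norm_nonneg _)
      have e4 : A ≤ A * ‖v‖ := by
        have : 0 ≤ A := abs_nonneg _
        nlinarith
      have e5 := le_abs_self (S.J a b y - g 0)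
      nlinarith
  obtain ⟨v0, hv0⟩ := hmax
  obtain ⟨hτM, hτmin⟩ := hτ _ (hmem v0 v0.2)
  have hM : ∀ h ∈ S.M, S.D a b (v0 + y + τ (v0 + y)) h = 0 := by
    apply D_zero_of_min
    intro w hw
    have := hτmin (τ (v0 + y) + w) (S.M.add_mem hτM hw)
    rwa [← add_assoc] at this
  refine ⟨v0, v0.2, τ (v0 + y), hτM, ?_, hM⟩
  intro h hh
  apply eq_zero_of_sq (k := S.l2 * ‖S.ι h‖ ^ 2 / 2)
  intro s
  have e1 := hv0 (v0 + s • ⟨h, hh⟩)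
  simp only [g] at e1
  push_cast at e1
  set w' := τ (v0 + s • h + y) with hw'
  have hw'M : w' ∈ S.M := (hτ _ (hmem _ (S.N.add_mem v0.2 (S.N.smul_mem s hh)))).1
  have hd := S.M.sub_mem hw'M hτM
  have e2 := S.le_J a b S.l2 ha.2.le hb.2.le (v0 + y + τ (v0 + y)) (s • h + (w' - τ (v0 + y)))
  rw [show (v0:H) + y + τ (v0 + y) + (s • h + (w' - τ (v0 + y))) = v0 + s • h + y + w' by abel,
    D_add, D_smul, hM _ hd, map_add, map_smul, norm_add_sq_real, norm_add_sq_real,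
    real_inner_smul_left, real_inner_smul_left, S.NM _ hh _ hd, S.NM2 _ hh _ hd,
    norm_smul, norm_smul, mul_pow, mul_pow, Real.norm_eq_abs, sq_abs] at e2
  have e3 := S.Mspec _ hd
  have e4 : 0 ≤ s ^ 2 * ‖h‖ ^ 2 := by positivity
  nlinarith

lemma y_le {a b : ℝ} (ha : a ∈ Set.Ioo S.l0 S.l2)
    {v y w : H} (hv : v ∈ S.N) (hy : y ∈ S.E) (hw : w ∈ S.M)
    (hD : ∀ h, S.D a b (v + y + w) h = 0) (hP : S.P (v + y + w) = 0) : S.P y = 0 := by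
  have hQ : S.ι (v + y + w) = - S.Q (v + y + w) := by rw [← S.PQ, hP]; simp
  have key : ∀ h, ⟪v + y + w, h⟫ = a * ⟪S.ι (v + y + w), S.ι h⟫ := by
    intro h
    have := hD h
    simp only [D, hP, smul_zero, zero_sub, inner_neg_left, real_inner_smul_left] at this
    rw [hQ, inner_neg_left]; linarith
  have hv0 : v = 0 := by
    by_contra h
    have e := key v
    have e1 := S.ι_pos h
    have e2 := S.Nspec v hv
    have f1 := S.NE v hv y hy
    have f2 := S.NM v hv w hw
    have f3 := S.NE2 v hv y hy
    have f4 := S.NM2 v hv w hw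
    rw [real_inner_comm] at f1 f2 f3 f4
    simp only [map_add, inner_add_left, f1, f2, f3, f4, add_zero, real_inner_self_eq_norm_sq] at e
    nlinarith [ha.1]
  have hw0 : w = 0 := by
    by_contra h
    have e := key w
    have e1 := S.ι_pos h
    have e2 := S.Mspec w hw
    have f1 := S.EM y hy w hw
    have f2 := S.NM v hv w hw
    have f3 := S.EM2 y hy w hw
    have f4 := S.NM2 v hv w hw
    simp only [map_add, inner_add_left, f1, f2, f3, f4, zero_add, real_inner_self_eq_norm_sq] at e
    nlinarith [ha.2]
  simpa [hv0, hw0] using hP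

lemma L3 {a b : ℝ} (ha : a ∈ Set.Ioo S.l0 S.l2) (hb : b ∈ Set.Ioo S.l0 S.l2)
    (τ : H → H) (hτ : ∀ v ∈ S.N ⊔ S.E, τ v ∈ S.M ∧ ∀ w ∈ S.M, S.J a b (v + τ v) ≤ S.J a b (v + w))
    (hK : ∀ u, (∀ h ∈ S.N, S.D a b u h = 0) → (∀ h ∈ S.M, S.D a b u h = 0) →
      ∀ h, S.D a b u h = 0) :
    S.Nc a b ∧ S.Mc a b ∧ (∀ b', b < b' → ¬ S.Nc a b') ∧ (∀ b', b' < b → ¬ S.Mc a b') := by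
  have sad : ∀ y ∈ S.E, ∃ v ∈ S.N, ∃ w ∈ S.M, ∀ h, S.D a b (v + y + w) h = 0 := by
    intro y hy
    obtain ⟨v, hv, w, hw, h1, h2⟩ := S.L2 ha hb τ hτ y hy
    exact ⟨v, hv, w, hw, hK _ h1 h2⟩
  have J0 : ∀ u, (∀ h, S.D a b u h = 0) → S.J a b u = 0 := by
    intro u h
    have := S.D_self a b u
    rw [h] at this; linarith
  have good : ∃ v ∈ S.N, ∃ y ∈ S.E, ∃ w ∈ S.M, (∀ h, S.D a b (v + y + w) h = 0) ∧
      S.P (v + y + w) ≠ 0 := by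
    obtain ⟨y, hy, hy0⟩ := Submodule.exists_mem_ne_zero_of_ne_bot S.Ene
    obtain ⟨v, hv, w, hw, h1⟩ := sad y hy
    obtain ⟨v', hv', w', hw', h1'⟩ := sad (-y) (S.E.neg_mem hy)
    by_contra hcon
    push Not at hcon
    have p1 := S.y_le ha hv hy hw h1 (hcon v hv y hy w hw h1)
    have p2 := S.y_le ha hv' (S.E.neg_mem hy) hw' h1' (hcon v' hv' _ (S.E.neg_mem hy) w' hw' h1')
    rw [S.Pneg] at p2
    have : S.ι y = 0 := by rw [← S.PQ, p1, p2]; simp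
    exact hy0 (S.inj (by simpa using this))
  obtain ⟨v, hv, y, hy, w, hw, hD, hP⟩ := good
  have hPp : 0 < ‖S.P (v + y + w)‖ ^ 2 := by positivity
  refine ⟨?_, ?_, ?_, ?_⟩
  · intro z hz
    obtain ⟨y, hy, w', hw', rfl⟩ := Submodule.mem_sup.1 hz
    obtain ⟨v, hv, w, hw, h1⟩ := sad y hy
    refine ⟨v, hv, ?_⟩
    have := S.min_strong (c := S.l2) ha.2.le hb.2.le _ (fun h _ => h1 h) (w' - w)
      (S.M.sub_mem hw' hw)
    rw [J0 _ h1, show v + y + w + (w' - w) = v + (y + w') by abel] at this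
    linarith
  · intro z hz
    obtain ⟨v', hv', y, hy, rfl⟩ := Submodule.mem_sup.1 hz
    obtain ⟨v, hv, w, hw, h1⟩ := sad y hy
    refine ⟨w, hw, ?_⟩
    have := S.max_strong (c := S.l0) ha.1.le hb.1.le _ (fun h _ => h1 h) (v' - v)
      (S.N.sub_mem hv' hv)
    rw [J0 _ h1, show v + y + w + (v' - v) = v' + y + w by abel] at this
    linarith
  · intro b' hbb hc
    obtain ⟨v', hv', h⟩ := hc (y + w) (Submodule.add_mem_sup hy hw)
    have e1 := S.max_strong (c := min a b) (min_le_left _ _) (min_le_right _ _) _ (fun h _ => hD h)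
      (v' - v) (S.N.sub_mem hv' hv)
    rw [J0 _ hD, show v + y + w + (v' - v) = v' + (y + w) by abel] at e1
    have hm : S.l0 < min a b := lt_min ha.1 hb.1
    have e2 := S.J_b a b b' (v' + (y + w))
    by_cases hvv : v' - v = 0
    · rw [sub_eq_zero] at hvv
      subst hvv
      rw [← add_assoc] at *
      rw [J0 _ hD] at e2
      nlinarith
    · have := S.ι_pos hvv
      have : 0 ≤ ‖S.P (v' + (y + w))‖ ^ 2 := by positivity
      nlinarith
  · intro b' hbb hc
    obtain ⟨w', hw', h⟩ := hc (v + y) (Submodule.add_mem_sup hv hy)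
    have e1 := S.min_strong (c := max a b) (le_max_left _ _) (le_max_right _ _) _ (fun h _ => hD h)
      (w' - w) (S.M.sub_mem hw' hw)
    rw [J0 _ hD, show v + y + w + (w' - w) = v + y + w' by abel] at e1
    have hm : max a b < S.l2 := max_lt ha.2 hb.2
    have e2 := S.J_b a b b' (v + y + w')
    by_cases hvv : w' - w = 0
    · rw [sub_eq_zero] at hvv
      subst hvv
      rw [J0 _ hD] at e2
      nlinarith
    · have := S.ι_pos hvv
      have : 0 ≤ ‖S.P (v + y + w')‖ ^ 2 := by positivity
      nlinarith

lemma P_add_le (u d : H) : ‖S.P (u + d)‖ ^ 2 ≤ 2 * ‖S.ι u‖ ^ 2 + 2 * ‖S.ι d‖ ^ 2 := by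
  refine (S.P_le _).trans ?_
  rw [map_add]
  have := norm_add_le (S.ι u) (S.ι d)
  have h0 := norm_nonneg (S.ι u + S.ι d)
  nlinarith [sq_nonneg (‖S.ι u‖ - ‖S.ι d‖)]

lemma L4N {a b : ℝ} (ha : a ∈ Set.Ioo S.l0 S.l2) (hb : b ∈ Set.Ioo S.l0 S.l2)
    (θ : H → H) (hθ : ∀ w ∈ S.E ⊔ S.M, θ w ∈ S.N ∧ ∀ v ∈ S.N, S.J a b (v + w) ≤ S.J a b (θ w + w))
    (h : ∀ ε > 0, ∃ b', b - ε < b' ∧ b' ≤ b ∧ S.Nc a b') : S.Nc a b := by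
  intro w hw
  refine ⟨θ w, (hθ w hw).1, ?_⟩
  by_contra hneg
  push Not at hneg
  set u := θ w + w with hu
  have hD : ∀ v ∈ S.N, S.D a b u v = 0 := by
    apply D_zero_of_max
    intro v hv
    have := (hθ w hw).2 (θ w + v) (S.N.add_mem (hθ w hw).1 hv)
    rwa [show θ w + v + w = u + v by rw [hu]; abel] at this
  have hm : S.l0 < min a b := lt_min ha.1 hb.1
  set q := ‖S.ι u‖ ^ 2 with hq
  have hq0 : 0 ≤ q := by positivity
  obtain ⟨b', h1, h2, h3⟩ := h (min ((min a b - S.l0) / 2) (-S.J a b u / (q + 1)))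
    (lt_min (by linarith) (div_pos (by linarith) (by linarith)))
  obtain ⟨v', hv', h4⟩ := h3 w hw
  have hvv := S.N.sub_mem hv' (hθ w hw).1
  have e1 := S.max_strong (c := min a b) (min_le_left _ _) (min_le_right _ _) _ hD _ hvv
  have e2 := S.J_b a b b' (u + (v' - θ w))
  have e3 := S.P_add_le u (v' - θ w)
  have e0 : u + (v' - θ w) = v' + w := by rw [hu]; abel
  rw [← e0] at h4
  have hr0 : 0 ≤ ‖S.ι (v' - θ w)‖ ^ 2 := by positivity
  generalize ‖S.ι (v' - θ w)‖ ^ 2 = r at *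
  have hr : b - b' < (min a b - S.l0) / 2 := by
    have := min_le_left ((min a b - S.l0) / 2) (-S.J a b u / (q + 1)); linarith
  have hr2 : b - b' < -S.J a b u / (q + 1) := by
    have := min_le_right ((min a b - S.l0) / 2) (-S.J a b u / (q + 1)); linarith
  rw [lt_div_iff₀ (by linarith)] at hr2
  have e4 : (b - b') / 2 * ‖S.P (u + (v' - θ w))‖ ^ 2 ≤ (b - b') / 2 * (2 * q + 2 * r) :=
    mul_le_mul_of_nonneg_left e3 (by linarith)
  have e5 := mul_le_mul_of_nonneg_right hr.le hr0
  linarith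

lemma L4M {a b : ℝ} (ha : a ∈ Set.Ioo S.l0 S.l2) (hb : b ∈ Set.Ioo S.l0 S.l2)
    (τ : H → H) (hτ : ∀ v ∈ S.N ⊔ S.E, τ v ∈ S.M ∧ ∀ w ∈ S.M, S.J a b (v + τ v) ≤ S.J a b (v + w))
    (h : ∀ ε > 0, ∃ b', b' < b + ε ∧ b ≤ b' ∧ S.Mc a b') : S.Mc a b := by
  intro w hw
  refine ⟨τ w, (hτ w hw).1, ?_⟩
  by_contra hneg
  push Not at hneg
  set u := w + τ w with hu
  have hD : ∀ v ∈ S.M, S.D a b u v = 0 := by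
    apply D_zero_of_min
    intro v hv
    have := (hτ w hw).2 (τ w + v) (S.M.add_mem (hτ w hw).1 hv)
    rwa [← add_assoc] at this
  have hm : max a b < S.l2 := max_lt ha.2 hb.2
  set q := ‖S.ι u‖ ^ 2 with hq
  have hq0 : 0 ≤ q := by positivity
  obtain ⟨b', h1, h2, h3⟩ := h (min ((S.l2 - max a b) / 2) (S.J a b u / (q + 1)))
    (lt_min (by linarith) (div_pos (by linarith) (by linarith)))
  obtain ⟨v', hv', h4⟩ := h3 w hw
  have hvv := S.M.sub_mem hv' (hτ w hw).1
  have e1 := S.min_strong (c := max a b) (le_max_left _ _) (le_max_right _ _) _ hD _ hvv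
  have e2 := S.J_b a b b' (u + (v' - τ w))
  have e3 := S.P_add_le u (v' - τ w)
  have e0 : u + (v' - τ w) = w + v' := by rw [hu]; abel
  rw [← e0] at h4
  have hr0 : 0 ≤ ‖S.ι (v' - τ w)‖ ^ 2 := by positivity
  generalize ‖S.ι (v' - τ w)‖ ^ 2 = r at *
  have hr : b' - b < (S.l2 - max a b) / 2 := by
    have := min_le_left ((S.l2 - max a b) / 2) (S.J a b u / (q + 1)); linarith
  have hr2 : b' - b < S.J a b u / (q + 1) := by
    have := min_le_right ((S.l2 - max a b) / 2) (S.J a b u / (q + 1)); linarith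
  rw [lt_div_iff₀ (by linarith)] at hr2
  have e4 : (b' - b) / 2 * ‖S.P (u + (v' - τ w))‖ ^ 2 ≤ (b' - b) / 2 * (2 * q + 2 * r) :=
    mul_le_mul_of_nonneg_left e3 (by linarith)
  have e5 := mul_le_mul_of_nonneg_right hr.le hr0
  linarith

lemma n_iff {a b : ℝ}
    (θ : H → H) (hθ : ∀ w ∈ S.E ⊔ S.M, θ w ∈ S.N ∧ ∀ v ∈ S.N, S.J a b (v + w) ≤ S.J a b (θ w + w)) :
    0 ≤ sInf {t : ℝ | ∃ w ∈ S.E ⊔ S.M, ‖w‖ = 1 ∧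
      t = sSup {r : ℝ | ∃ v ∈ S.N, r = S.J a b (v + w)}} ↔ S.Nc a b := by
  have hsup : ∀ w ∈ S.E ⊔ S.M, sSup {r : ℝ | ∃ v ∈ S.N, r = S.J a b (v + w)}
      = S.J a b (θ w + w) := by
    intro w hw
    apply IsGreatest.csSup_eq
    refine ⟨⟨θ w, (hθ w hw).1, rfl⟩, ?_⟩
    rintro _ ⟨v, hv, rfl⟩
    exact (hθ w hw).2 v hv
  constructor
  · intro h w hw
    by_cases hw0 : w = 0
    · exact ⟨0, S.N.zero_mem, by rw [hw0, add_zero, J_zero]⟩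
    have hn : 0 < ‖w‖ := norm_pos_iff.2 hw0
    set w1 := ‖w‖⁻¹ • w with hw1
    have hw1m : w1 ∈ S.E ⊔ S.M := Submodule.smul_mem _ _ hw
    have hw1n : ‖w1‖ = 1 := by rw [hw1, norm_smul, norm_inv, norm_norm]; field_simp
    refine ⟨‖w‖ • θ w1, S.N.smul_mem _ (hθ _ hw1m).1, ?_⟩
    have e : ‖w‖ • θ w1 + w = ‖w‖ • (θ w1 + w1) := by
      rw [smul_add, hw1, smul_smul, mul_inv_cancel₀ hn.ne', one_smul]
    rw [e, S.J_smul _ _ _ hn.le]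
    refine mul_nonneg (by positivity) (h.trans ?_)
    apply csInf_le
    · refine ⟨-(max (max a b) 0 * S.C ^ 2) / 2, ?_⟩
      rintro _ ⟨z, hz, hz1, rfl⟩
      rw [hsup z hz]
      have e1 := (hθ z hz).2 0 S.N.zero_mem
      have e2 := S.le_J a b (max (max a b) 0) (by simp) (by simp) 0 z
      have e3 := S.bound z
      have e4 : ‖S.ι z‖ ^ 2 ≤ S.C ^ 2 := by
        rw [hz1, mul_one] at e3
        gcongr
      have e5 := mul_le_mul_of_nonneg_left e4 (le_max_right (max a b) 0)
      have e6 : S.D a b 0 z = 0 := by simp [D, P_zero, Q_zero]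
      rw [J_zero, e6] at e2
      have := sq_nonneg ‖z‖
      linarith
    · exact ⟨w1, hw1m, hw1n, (hsup _ hw1m).symm⟩
  · intro h
    apply Real.sInf_nonneg
    rintro _ ⟨z, hz, hz1, rfl⟩
    rw [hsup z hz]
    obtain ⟨v, hv, h1⟩ := h z hz
    exact h1.trans ((hθ z hz).2 v hv)

lemma m_iff {a b : ℝ}
    (τ : H → H) (hτ : ∀ v ∈ S.N ⊔ S.E, τ v ∈ S.M ∧ ∀ w ∈ S.M, S.J a b (v + τ v) ≤ S.J a b (v + w)) :
    sSup {t : ℝ | ∃ v ∈ S.N ⊔ S.E, ‖v‖ = 1 ∧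
      t = sInf {r : ℝ | ∃ w ∈ S.M, r = S.J a b (v + w)}} ≤ 0 ↔ S.Mc a b := by
  have hsup : ∀ v ∈ S.N ⊔ S.E, sInf {r : ℝ | ∃ w ∈ S.M, r = S.J a b (v + w)}
      = S.J a b (v + τ v) := by
    intro w hw
    apply IsLeast.csInf_eq
    refine ⟨⟨τ w, (hτ w hw).1, rfl⟩, ?_⟩
    rintro _ ⟨v, hv, rfl⟩
    exact (hτ w hw).2 v hv
  constructor
  · intro h w hw
    by_cases hw0 : w = 0
    · exact ⟨0, S.M.zero_mem, by rw [hw0, add_zero, J_zero]⟩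
    have hn : 0 < ‖w‖ := norm_pos_iff.2 hw0
    set w1 := ‖w‖⁻¹ • w with hw1
    have hw1m : w1 ∈ S.N ⊔ S.E := Submodule.smul_mem _ _ hw
    have hw1n : ‖w1‖ = 1 := by rw [hw1, norm_smul, norm_inv, norm_norm]; field_simp
    refine ⟨‖w‖ • τ w1, S.M.smul_mem _ (hτ _ hw1m).1, ?_⟩
    have e : w + ‖w‖ • τ w1 = ‖w‖ • (w1 + τ w1) := by
      rw [smul_add, hw1, smul_smul, mul_inv_cancel₀ hn.ne', one_smul]
    rw [e, S.J_smul _ _ _ hn.le]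
    refine mul_nonpos_of_nonneg_of_nonpos (by positivity) (le_trans ?_ h)
    apply le_csSup
    · refine ⟨1 / 2 - (min (min a b) 0 * S.C ^ 2) / 2, ?_⟩
      rintro _ ⟨z, hz, hz1, rfl⟩
      rw [hsup z hz]
      have e1 := (hτ z hz).2 0 S.M.zero_mem
      have e2 := S.J_le a b (min (min a b) 0) (by simp) (by simp) 0 z
      have e3 := S.bound z
      have e4 : ‖S.ι z‖ ^ 2 ≤ S.C ^ 2 := by
        rw [hz1, mul_one] at e3
        gcongr
      have e5 := mul_le_mul_of_nonpos_left e4 (min_le_right (min a b) 0)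
      have e6 : S.D a b 0 z = 0 := by simp [D, P_zero, Q_zero]
      rw [J_zero, e6, hz1, zero_add] at e2
      rw [add_zero] at e1
      linarith
    · exact ⟨w1, hw1m, hw1n, (hsup _ hw1m).symm⟩
  · intro h
    apply Real.sSup_nonpos
    rintro _ ⟨z, hz, hz1, rfl⟩
    rw [hsup z hz]
    obtain ⟨v, hv, h1⟩ := h z hz
    exact ((hτ z hz).2 v hv).trans h1

end Dat

section Lp
variable {Ω : Type*} [MeasurableSpace Ω] {μ : Measure Ω}

lemma inner_eq (f g : Lp ℝ 2 μ) : ⟪f, g⟫ = ∫ x, f x * g x ∂μ := by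
  rw [L2.inner_def]
  congr 1; ext x
  simp [mul_comm]

lemma pos_ae (f : Lp ℝ 2 μ) : ∀ᵐ x ∂μ, Lp.posPart f x = max (f x) 0 := Lp.coeFn_posPart f
lemma neg_ae (f : Lp ℝ 2 μ) : ∀ᵐ x ∂μ, Lp.negPart f x = max (-f x) 0 := by
  filter_upwards [Lp.coeFn_negPart f] with x hx
  rw [hx, ← max_neg_neg, neg_zero]

lemma pos_sub_neg (f : Lp ℝ 2 μ) : Lp.posPart f - Lp.negPart f = f := by
  ext1
  filter_upwards [pos_ae f, neg_ae f, Lp.coeFn_sub (Lp.posPart f) (Lp.negPart f)] with x h1 h2 h3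
  rw [h3, Pi.sub_apply, h1, h2]
  rcases le_total (f x) 0 with h | h <;> simp [h]

lemma pos_orth (f : Lp ℝ 2 μ) : ⟪Lp.posPart f, Lp.negPart f⟫ = 0 := by
  rw [inner_eq]
  apply integral_eq_zero_of_ae
  filter_upwards [pos_ae f, neg_ae f] with x h1 h2
  rw [h1, h2]
  rcases le_total (f x) 0 with h | h <;> simp [h]

lemma pos_nonneg (f g : Lp ℝ 2 μ) : 0 ≤ ⟪Lp.posPart f, Lp.negPart g⟫ := by
  rw [inner_eq]
  apply integral_nonneg_of_ae
  filter_upwards [pos_ae f, neg_ae g] with x h1 h2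
  rw [h1, h2]
  simp only [Pi.zero_apply]
  positivity

lemma pos_smul (t : ℝ) (ht : 0 ≤ t) (f : Lp ℝ 2 μ) : Lp.posPart (t • f) = t • Lp.posPart f := by
  ext1
  filter_upwards [pos_ae f, pos_ae (t • f), Lp.coeFn_smul t f, Lp.coeFn_smul t (Lp.posPart f)]
    with x h1 h2 h3 h4
  rw [h2, h4, h3, Pi.smul_apply, Pi.smul_apply, h1, smul_eq_mul, smul_eq_mul,
    mul_max_of_nonneg _ _ ht, mul_zero]

lemma pos_neg (f : Lp ℝ 2 μ) : Lp.posPart (-f) = Lp.negPart f := rfl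

lemma int_sq (a b : ℝ) (f g : Lp ℝ 2 μ) :
    ∫ x, (b * f x ^ 2 + a * g x ^ 2) ∂μ = b * ‖f‖ ^ 2 + a * ‖g‖ ^ 2 := by
  have i1 := (L2.integrable_inner (𝕜 := ℝ) f f)
  have i2 := (L2.integrable_inner (𝕜 := ℝ) g g)
  simp only [RCLike.inner_apply, conj_trivial, ← sq] at i1 i2
  rw [integral_add (i1.const_mul b) (i2.const_mul a), integral_const_mul, integral_const_mul,
    ← real_inner_self_eq_norm_sq, ← real_inner_self_eq_norm_sq, inner_eq, inner_eq]
  simp only [sq]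

lemma int_lin (a b : ℝ) (f g h : Lp ℝ 2 μ) :
    ∫ x, (b * f x - a * g x) * h x ∂μ = ⟪b • f - a • g, h⟫ := by
  rw [inner_eq]
  apply integral_congr_ae
  filter_upwards [Lp.coeFn_sub (b • f) (a • g), Lp.coeFn_smul b f, Lp.coeFn_smul a g]
    with x h1 h2 h3
  rw [h1, Pi.sub_apply, h2, h3]
  simp

end Lp
end DF

theorem K_eq_null_manifold_iff_on_both_curves
    {Ω : Type*} [MeasurableSpace Ω] (μ : Measure Ω)
    {H : Type*} [NormedAddCommGroup H] [InnerProductSpace ℝ H] [CompleteSpace H]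
    (ι : H →ₗ[ℝ] Lp ℝ 2 μ) (hι : Function.Injective ι)
    (C : ℝ) (hC : 0 < C) (hιC : ∀ u : H, ‖ι u‖ ≤ C * ‖u‖)
    (I : H → ℝ → ℝ → ℝ)
    (hI : ∀ u a b, I u a b = ‖u‖ ^ 2 / 2 -
      (∫ x, (b * (Lp.posPart (ι u)) x ^ 2 + a * (Lp.negPart (ι u)) x ^ 2) ∂μ) / 2)
    (lam₀ lam₁ lam₂ : ℝ) (hlam₀ : 0 < lam₀) (hlam₀₁ : lam₀ < lam₁) (hlam₁₂ : lam₁ < lam₂)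
    (N E M : Submodule ℝ H)
    (hNcl : IsClosed (N : Set H)) (hEcl : IsClosed (E : Set H)) (hMcl : IsClosed (M : Set H))
    (hNfd : FiniteDimensional ℝ N) (hEfd : FiniteDimensional ℝ E) (hEne : E ≠ ⊥)
    (horthNE : ∀ v ∈ N, ∀ y ∈ E, ⟪v, y⟫ = 0)
    (horthNM : ∀ v ∈ N, ∀ w ∈ M, ⟪v, w⟫ = 0)
    (horthEM : ∀ y ∈ E, ∀ w ∈ M, ⟪y, w⟫ = 0)
    (horthNE2 : ∀ v ∈ N, ∀ y ∈ E, ∫ x, (ι v) x * (ι y) x ∂μ = 0)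
    (horthNM2 : ∀ v ∈ N, ∀ w ∈ M, ∫ x, (ι v) x * (ι w) x ∂μ = 0)
    (horthEM2 : ∀ y ∈ E, ∀ w ∈ M, ∫ x, (ι y) x * (ι w) x ∂μ = 0)
    (hdirect : N ⊔ E ⊔ M = ⊤)
    (hNspec : ∀ v ∈ N, ‖v‖ ^ 2 ≤ lam₀ * ‖ι v‖ ^ 2)
    (hEspec : ∀ y ∈ E, ∀ u : H, ⟪y, u⟫ = lam₁ * ∫ x, (ι y) x * (ι u) x ∂μ)
    (hMspec : ∀ w ∈ M, lam₂ * ‖ι w‖ ^ 2 ≤ ‖w‖ ^ 2)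
    (hcompact : ∀ s : Set H, Bornology.IsBounded s →
      IsCompact (closure ((fun u => ι u) '' s)))
    (K : ℝ → ℝ → Set H)
    (hK : ∀ a b, K a b = {u : H | ∀ v : H,
      ⟪u, v⟫ = ∫ x, (b * (Lp.posPart (ι u)) x - a * (Lp.negPart (ι u)) x) * (ι v) x ∂μ})
    (θ : ℝ → ℝ → H → H)
    (hθ : ∀ a b, a ∈ Set.Ioo lam₀ lam₂ → b ∈ Set.Ioo lam₀ lam₂ → ∀ w ∈ E ⊔ M,
      θ a b w ∈ N ∧ (∀ v ∈ N, I (v + w) a b ≤ I (θ a b w + w) a b) ∧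
      (∀ v ∈ N, (∀ v' ∈ N, I (v' + w) a b ≤ I (v + w) a b) → v = θ a b w))
    (τ : ℝ → ℝ → H → H)
    (hτ : ∀ a b, a ∈ Set.Ioo lam₀ lam₂ → b ∈ Set.Ioo lam₀ lam₂ → ∀ v ∈ N ⊔ E,
      τ a b v ∈ M ∧ (∀ w ∈ M, I (v + τ a b v) a b ≤ I (v + w) a b) ∧
      (∀ w ∈ M, (∀ w' ∈ M, I (v + w) a b ≤ I (v + w') a b) → w = τ a b v))
    (Sk Sk' : ℝ → ℝ → Set H)
    (hSk : ∀ a b, Sk a b = {u : H | ∃ w ∈ E ⊔ M, u = θ a b w + w})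
    (hSk' : ∀ a b, Sk' a b = {u : H | ∃ v ∈ N ⊔ E, u = v + τ a b v})
    (n m : ℝ → ℝ → ℝ)
    (hn : ∀ a b, n a b = sInf {t : ℝ | ∃ w ∈ E ⊔ M, ‖w‖ = 1 ∧
      t = sSup {r : ℝ | ∃ v ∈ N, r = I (v + w) a b}})
    (hm : ∀ a b, m a b = sSup {t : ℝ | ∃ v ∈ N ⊔ E, ‖v‖ = 1 ∧
      t = sInf {r : ℝ | ∃ w ∈ M, r = I (v + w) a b}})
    (ν μf : ℝ → ℝ)
    (hν : ∀ a, ν a = sSup {b ∈ Set.Ioo lam₀ lam₂ | 0 ≤ n a b})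
    (hμf : ∀ a, μf a = sInf {b ∈ Set.Ioo lam₀ lam₂ | m a b ≤ 0})
    :
    ∀ a b, a ∈ Set.Ioo lam₀ lam₂ → b ∈ Set.Ioo lam₀ lam₂ →
      (K a b = Sk a b ∩ Sk' a b ↔ (b = ν a ∧ b = μf a)) := by
  let S : DF.Dat H (Lp ℝ 2 μ) :=
    { ι := ι
      inj := hι
      C := C
      bound := hιC
      P := fun u => Lp.posPart (ι u)
      Q := fun u => Lp.negPart (ι u)
      PQ := fun u => DF.pos_sub_neg _
      orth := fun u => DF.pos_orth _
      nonneg := fun u v => DF.pos_nonneg _ _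
      Psmul := fun t u ht => by rw [map_smul, DF.pos_smul t ht]
      Qsmul := fun t u ht => by
        rw [map_smul, ← DF.pos_neg, ← DF.pos_neg, ← smul_neg, DF.pos_smul t ht]
      Pneg := fun u => by rw [map_neg, DF.pos_neg]
      Pcont := Lp.continuous_posPart.comp (ι.mkContinuous C hιC).continuous
      Qcont := Lp.continuous_negPart.comp (ι.mkContinuous C hιC).continuous
      l0 := lam₀
      l1 := lam₁
      l2 := lam₂
      hl0 := hlam₀
      N := N
      E := E
      M := M
      Nfd := hNfd
      Ene := hEne
      NE := horthNE
      NM := horthNM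
      EM := horthEM
      NE2 := fun v hv y hy => by rw [DF.inner_eq]; exact horthNE2 v hv y hy
      NM2 := fun v hv y hy => by rw [DF.inner_eq]; exact horthNM2 v hv y hy
      EM2 := fun v hv y hy => by rw [DF.inner_eq]; exact horthEM2 v hv y hy
      top := hdirect
      Nspec := hNspec
      Espec := fun y hy u => by rw [DF.inner_eq]; exact hEspec y hy u
      Mspec := hMspec }
  have hIJ : ∀ u a b, I u a b = S.J a b u := by
    intro u a b
    rw [hI, DF.int_sq]
    simp only [DF.Dat.J, S]
    ring
  have hKD : ∀ a b u, u ∈ K a b ↔ ∀ h, S.D a b u h = 0 := by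
    intro a b u
    rw [hK]
    refine forall_congr' fun h => ?_
    rw [DF.int_lin, ← sub_eq_zero]
    rfl
  simp only [hIJ] at hθ hτ hn hm
  have hθ' : ∀ a b, a ∈ Set.Ioo lam₀ lam₂ → b ∈ Set.Ioo lam₀ lam₂ → ∀ w ∈ S.E ⊔ S.M,
      θ a b w ∈ S.N ∧ ∀ v ∈ S.N, S.J a b (v + w) ≤ S.J a b (θ a b w + w) :=
    fun a b ha hb w hw => ⟨(hθ a b ha hb w hw).1, (hθ a b ha hb w hw).2.1⟩
  have hτ' : ∀ a b, a ∈ Set.Ioo lam₀ lam₂ → b ∈ Set.Ioo lam₀ lam₂ → ∀ v ∈ S.N ⊔ S.E,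
      τ a b v ∈ S.M ∧ ∀ w ∈ S.M, S.J a b (v + τ a b v) ≤ S.J a b (v + w) :=
    fun a b ha hb w hw => ⟨(hτ a b ha hb w hw).1, (hτ a b ha hb w hw).2.1⟩
  have hnN : ∀ a b, a ∈ Set.Ioo lam₀ lam₂ → b ∈ Set.Ioo lam₀ lam₂ →
      (0 ≤ n a b ↔ S.Nc a b) := by
    intro a b ha hb
    rw [hn]
    exact S.n_iff (θ a b) (hθ' a b ha hb)
  have hmM : ∀ a b, a ∈ Set.Ioo lam₀ lam₂ → b ∈ Set.Ioo lam₀ lam₂ →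
      (m a b ≤ 0 ↔ S.Mc a b) := by
    intro a b ha hb
    rw [hm]
    exact S.m_iff (τ a b) (hτ' a b ha hb)
  intro a b ha hb
  have hSkD : ∀ u, u ∈ Sk a b ↔ ∀ h ∈ S.N, S.D a b u h = 0 := by
    intro u
    rw [hSk]
    constructor
    · rintro ⟨w, hw, rfl⟩
      apply S.D_zero_of_max
      intro v hv
      have := (hθ' a b ha hb w hw).2 (θ a b w + v) (S.N.add_mem (hθ' a b ha hb w hw).1 hv)
      rwa [add_right_comm] at this
    · intro h
      obtain ⟨v, hv, y, hy, w, hw, rfl⟩ := S.decomp u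
      have hyw : y + w ∈ E ⊔ M := Submodule.add_mem_sup hy hw
      refine ⟨y + w, hyw, ?_⟩
      rw [← (hθ a b ha hb _ hyw).2.2 v hv ?_, add_assoc]
      intro v' hv'
      have := S.max_strong (c := lam₀) ha.1.le hb.1.le _ h (v' - v) (S.N.sub_mem hv' hv)
      rw [show v + y + w + (v' - v) = v' + (y + w) by abel, show S.l0 = lam₀ from rfl,
        sub_self, zero_div, zero_mul, sub_zero, add_assoc] at this
      exact this
  have hSkD' : ∀ u, u ∈ Sk' a b ↔ ∀ h ∈ S.M, S.D a b u h = 0 := by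
    intro u
    rw [hSk']
    constructor
    · rintro ⟨w, hw, rfl⟩
      apply S.D_zero_of_min
      intro v hv
      have := (hτ' a b ha hb w hw).2 (τ a b w + v) (S.M.add_mem (hτ' a b ha hb w hw).1 hv)
      rwa [← add_assoc] at this
    · intro h
      obtain ⟨v, hv, y, hy, w, hw, rfl⟩ := S.decomp u
      have hvy : v + y ∈ N ⊔ E := Submodule.add_mem_sup hv hy
      refine ⟨v + y, hvy, ?_⟩
      rw [← (hτ a b ha hb _ hvy).2.2 w hw ?_]
      intro w' hw'
      have := S.min_strong (c := lam₂) ha.2.le hb.2.le _ h (w' - w) (S.M.sub_mem hw' hw)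
      rw [show v + y + w + (w' - w) = v + y + w' by abel, show S.l2 = lam₂ from rfl,
        sub_self, zero_div, zero_mul, add_zero] at this
      exact this
  constructor
  · intro hKS
    obtain ⟨h1, h2, h3, h4⟩ := S.L3 ha hb (τ a b) (hτ' a b ha hb) (by
      intro u hu1 hu2
      rw [← hKD, hKS]
      exact ⟨(hSkD u).2 hu1, (hSkD' u).2 hu2⟩)
    constructor
    · rw [hν]
      symm
      apply IsGreatest.csSup_eq
      refine ⟨⟨hb, (hnN a b ha hb).2 h1⟩, ?_⟩
      rintro b' ⟨hb', hnb⟩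
      by_contra hlt
      push Not at hlt
      exact h3 b' hlt ((hnN a b' ha hb').1 hnb)
    · rw [hμf]
      symm
      apply IsLeast.csInf_eq
      refine ⟨⟨hb, (hmM a b ha hb).2 h2⟩, ?_⟩
      rintro b' ⟨hb', hnb⟩
      by_contra hlt
      push Not at hlt
      exact h4 b' hlt ((hmM a b' ha hb').1 hnb)
  · rintro ⟨hb1, hb2⟩
    rw [hν] at hb1
    rw [hμf] at hb2
    have hN : S.Nc a b := by
      apply S.L4N ha hb (θ a b) (hθ' a b ha hb)
      intro ε hε
      have hne : {b ∈ Set.Ioo lam₀ lam₂ | 0 ≤ n a b}.Nonempty := by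
        by_contra hcon
        rw [Set.not_nonempty_iff_eq_empty] at hcon
        rw [hcon, Real.sSup_empty] at hb1
        linarith [hb.1]
      have hbdd : BddAbove {b ∈ Set.Ioo lam₀ lam₂ | 0 ≤ n a b} := ⟨lam₂, fun x hx => hx.1.2.le⟩
      obtain ⟨b', hb', hlt⟩ := exists_lt_of_lt_csSup hne (show b - ε < _ by rw [← hb1]; linarith)
      exact ⟨b', hlt, by rw [hb1]; exact le_csSup hbdd hb', (hnN a b' ha hb'.1).1 hb'.2⟩
    have hM : S.Mc a b := by
      apply S.L4M ha hb (τ a b) (hτ' a b ha hb)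
      intro ε hε
      have hne : {b ∈ Set.Ioo lam₀ lam₂ | m a b ≤ 0}.Nonempty := by
        by_contra hcon
        rw [Set.not_nonempty_iff_eq_empty] at hcon
        rw [hcon, Real.sInf_empty] at hb2
        linarith [hb.1]
      have hbdd : BddBelow {b ∈ Set.Ioo lam₀ lam₂ | m a b ≤ 0} := ⟨lam₀, fun x hx => hx.1.1.le⟩
      obtain ⟨b', hb', hlt⟩ := exists_lt_of_csInf_lt hne (show _ < b + ε by rw [← hb2]; linarith)
      exact ⟨b', hlt, by rw [hb2]; exact csInf_le hbdd hb', (hmM a b' ha hb'.1).1 hb'.2⟩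
    ext u
    rw [Set.mem_inter_iff, hSkD, hSkD', hKD]
    constructor
    · intro h
      exact ⟨fun v _ => h v, fun v _ => h v⟩
    · rintro ⟨h1, h2⟩
      exact S.L1 ha hb hN hM u h1 h2
end
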